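/- arXiv:1206.6747 — 8 statements merged into one kernel-verified Lean document; each statement's English description precedes it below -/
import Mathlib

section
/- Let f ∈ 𝓔 be a simple exponential polynomial and let g ∈ 𝓔 be a nonzero exponential polynomial such that f and g have infinitely many common zeros in ℂ. Then there exists a non-unit h ∈ 𝓔, having infinitely many zeros in ℂ, which divides both f and g in the ring 𝓔. -/
open Complex Set

noncomputable section

/-- `f` is an exponential polynomial, i.e. an element of the ring `𝓔`. -/
def IsExpPoly (f : ℂ → ℂ) : Prop :=
  ∃ (N : ℕ) (lam mu : Fin N → ℂ),
    ∀ z : ℂ, f z = ∑ i, lam i * Complex.exp (mu i * z)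

/-- `h` divides `f` in the ring `𝓔`. -/
def EDvd (h f : ℂ → ℂ) : Prop :=
  ∃ q : ℂ → ℂ, IsExpPoly q ∧ f = h * q

/-- `f` is a unit of the ring `𝓔`. -/
def EUnit (f : ℂ → ℂ) : Prop :=
  IsExpPoly f ∧ ∃ g : ℂ → ℂ, IsExpPoly g ∧ f * g = 1

/-- `f` is irreducible in the ring `𝓔`. -/
def EIrreducible (f : ℂ → ℂ) : Prop :=
  IsExpPoly f ∧ f ≠ 0 ∧ ¬ EUnit f ∧
    ∀ g h : ℂ → ℂ, IsExpPoly g → IsExpPoly h → f = g * h → EUnit g ∨ EUnit h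

/-- canonical representation: pairwise distinct exponents, nonzero coefficients. -/
def IsCanonicalRep (f : ℂ → ℂ) {N : ℕ} (lam mu : Fin N → ℂ) : Prop :=
  (∀ i, lam i ≠ 0) ∧ Function.Injective mu ∧
    ∀ z : ℂ, f z = ∑ i, lam i * Complex.exp (mu i * z)

/-- `f` is a simple exponential polynomial: its support has `ℚ`-dimension 1. -/
def IsSimple (f : ℂ → ℂ) : Prop :=
  ∃ (N : ℕ) (lam mu : Fin N → ℂ), IsCanonicalRep f lam mu ∧
    Module.finrank ℚ (Submodule.span ℚ (Set.range mu)) = 1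

/-- Transcendence degree over `ℚ` of (the field generated by) a set of complex numbers. -/
noncomputable def trdegQ (s : Set ℂ) : Cardinal.{0} :=
  ⨆ t : {t : Finset ℂ // ↑t ⊆ s ∧ AlgebraicIndependent ℚ (Subtype.val : {x : ℂ // x ∈ t} → ℂ)},
    (t.1.card : Cardinal)

/-- Schanuel's Conjecture. -/
def SchanuelConjecture : Prop :=
  ∀ (n : ℕ) (lam : Fin n → ℂ), LinearIndependent ℚ lam →
    (n : Cardinal) ≤ trdegQ (Set.range lam ∪ Set.range fun i => Complex.exp (lam i))


lemma han_div (I : AddSubgroup ℂ) (Q R : Polynomial ℂ) (n k : ℕ)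
    (h : Q = (Polynomial.X - Polynomial.C (n:ℂ)) * R)
    (hQ : ∀ i, k + 1 ≤ i → Q.coeff i ∈ I) : ∀ i, k ≤ i → R.coeff i ∈ I := by
  have key : ∀ d i, k ≤ i → R.natDegree + 1 ≤ i + d → R.coeff i ∈ I := by
    intro d
    induction d with
    | zero =>
      intro i _ hi
      rw [Polynomial.coeff_eq_zero_of_natDegree_lt (by omega)]
      exact I.zero_mem
    | succ d ih =>
      intro i hk hi
      have h1 := ih (i+1) (by omega) (by omega)
      have h2 := hQ (i+1) (by omega)
      have h3 : R.coeff i = Q.coeff (i+1) + n • R.coeff (i+1) := by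
        rw [h, sub_mul, Polynomial.coeff_sub, Polynomial.coeff_X_mul, Polynomial.coeff_C_mul]
        simp
      rw [h3]
      exact I.add_mem h2 (I.nsmul_mem h1 n)
  intro i hi
  exact key (R.natDegree + 1) i hi (by omega)

lemma han_roots (I : AddSubgroup ℂ) (S : Finset ℕ) : ∀ (Q : Polynomial ℂ),
    (∀ n ∈ S, Q.eval (n:ℂ) = 0) → (∀ i, S.card ≤ i → Q.coeff i ∈ I) →
    ∀ t : ℕ, Q.eval (t:ℂ) ∈ I := by
  induction S using Finset.induction_on with
  | empty =>
    intro Q _ hQ t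
    rw [Polynomial.eval_eq_sum_range]
    refine I.sum_mem fun i _ => ?_
    have := I.nsmul_mem (hQ i (by simp)) (t^i)
    rw [nsmul_eq_mul] at this
    push_cast at this
    rwa [mul_comm]
  | insert n S hn ih =>
    intro Q hz hQ t
    obtain ⟨R, hR⟩ := Polynomial.dvd_iff_isRoot.2 (hz n (by simp))
    rw [Finset.card_insert_of_notMem hn] at hQ
    have hRc := han_div I Q R n _ hR hQ
    have hRz : ∀ m ∈ S, R.eval (m:ℂ) = 0 := by
      intro m hm
      have := hz m (by simp [hm])
      rw [hR, Polynomial.eval_mul] at this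
      rcases mul_eq_zero.1 this with h | h
      · simp [sub_eq_zero] at h
        exact absurd (h ▸ hm) hn
      · exact h
    have := ih R hRz hRc t
    rw [hR, Polynomial.eval_mul]
    have h2 := I.zsmul_mem this ((t:ℤ) - n)
    rw [zsmul_eq_mul] at h2
    push_cast at h2
    simpa using h2

def pIdeal (A : Subring ℂ) (p e : ℕ) : AddSubgroup ℂ :=
  A.toAddSubgroup.map (AddMonoidHom.mulLeft ((p:ℂ)^e))

lemma mem_pIdeal {A : Subring ℂ} {p e : ℕ} {x : ℂ} :
    x ∈ pIdeal A p e ↔ ∃ a ∈ A, (p:ℂ)^e * a = x := by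
  simp [pIdeal]

lemma han_fact (A : Subring ℂ) (p : ℕ) (hp : p.Prime) (hp2 : p ≠ 2)
    (hA : ∀ m : ℕ, ¬ p ∣ m → ((m:ℂ))⁻¹ ∈ A) (e j : ℕ) (hj : 2 * e ≤ j) :
    (p:ℂ)^j / (j.factorial : ℂ) ∈ pIdeal A p e := by
  have := Fact.mk hp
  have h1 := sub_one_mul_padicValNat_factorial (p := p) j
  have hp3 : 2 ≤ p - 1 := by have := hp.two_le; omega
  set v := padicValNat p j.factorial with hv
  have h2 : 2 * v ≤ j := by
    have := Nat.mul_le_mul_right v hp3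
    omega
  obtain ⟨u, hu⟩ : p ^ v ∣ j.factorial := pow_padicValNat_dvd
  have hu0 : ¬ p ∣ u := by
    rintro ⟨w, hw⟩
    have h3 : p ^ (v+1) ∣ j.factorial := ⟨w, by rw [hu, hw]; ring⟩
    have := (padicValNat_dvd_iff_le (p := p) (Nat.factorial_ne_zero j)).1 h3
    omega
  rw [mem_pIdeal]
  refine ⟨(p:ℂ)^(j - v - e) * (u:ℂ)⁻¹, A.mul_mem (A.pow_mem (by simp) _) (hA u hu0), ?_⟩
  have hpc : (p:ℂ) ≠ 0 := by exact_mod_cast hp.ne_zero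
  have huc : (u:ℂ) ≠ 0 := by
    rintro h
    apply hu0
    have : u = 0 := by exact_mod_cast h
    simp [this]
  have hjv : j = v + (e + (j - v - e)) := by omega
  rw [hu]
  push_cast
  rw [eq_div_iff (by positivity)]
  conv_rhs => rw [hjv]
  field_simp
  ring

lemma hansel {ι : Type*} (s : Finset ι) (A : Subring ℂ) (p : ℕ) (hp : p.Prime) (hp2 : p ≠ 2)
    (hA : ∀ m : ℕ, ¬ p ∣ m → ((m:ℂ))⁻¹ ∈ A)
    (hsep : ∀ r : ℂ, (∀ k : ℕ, ∃ a ∈ A, (p:ℂ)^k * a = r) → r = 0)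
    (c y : ι → ℂ) (hc : ∀ j ∈ s, c j ∈ A) (hy : ∀ j ∈ s, y j ∈ A)
    (hinf : {n : ℕ | ∑ j ∈ s, c j * (1 + p * y j)^n = 0}.Infinite) (t : ℕ) :
    ∑ j ∈ s, c j * (1 + p * y j)^t = 0 := by
  apply hsep
  intro e
  obtain ⟨S, hS, hcard⟩ := hinf.exists_subset_card_eq (2*e)
  let m := S.sup id + t
  let d : ℕ → ℂ := fun k => ∑ j ∈ s, c j * (y j)^k
  have hd : ∀ k, d k ∈ A := fun k => A.sum_mem fun j hj => A.mul_mem (hc j hj) (A.pow_mem (hy j hj) _)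
  let P : Polynomial ℂ := ∑ k ∈ Finset.range (m+1),
    Polynomial.C (d k * ((p:ℂ)^k / (k.factorial:ℂ))) * descPochhammer ℂ k
  have hev : ∀ n ≤ m, P.eval (n:ℂ) = ∑ j ∈ s, c j * (1 + p * y j)^n := by
    intro n hn
    simp only [P, Polynomial.eval_finsetSum, Polynomial.eval_mul, Polynomial.eval_C,
      descPochhammer_eval_eq_descFactorial]
    have h1 : ∀ k, d k * ((p:ℂ)^k / (k.factorial:ℂ)) * (n.descFactorial k : ℂ)
        = ∑ j ∈ s, c j * ((p * y j)^k * (n.choose k : ℂ)) := by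
      intro k
      rw [Nat.descFactorial_eq_factorial_mul_choose]
      have : (k.factorial : ℂ) ≠ 0 := by exact_mod_cast Nat.factorial_ne_zero k
      simp only [d, Finset.sum_mul]
      push_cast
      refine Finset.sum_congr rfl fun j _ => ?_
      rw [mul_pow]
      field_simp
    simp only [h1]
    rw [Finset.sum_comm]
    refine Finset.sum_congr rfl fun j _ => ?_
    rw [← Finset.mul_sum, add_comm (1:ℂ), add_pow]
    congr 1
    simp only [one_pow, mul_one]
    symm
    apply Finset.sum_subset
    · intro k; simp; omega
    · intro k _ hk
      simp at hk
      rw [Nat.choose_eq_zero_of_lt (by omega)]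
      simp
  rw [← mem_pIdeal, ← hev t (by simp [m])]
  apply han_roots _ S P
  · intro n hn
    have : n ≤ m := le_trans (Finset.le_sup (f := id) hn) (by simp [m])
    rw [hev n this]
    exact hS hn
  · intro i hi
    simp only [P, Polynomial.finsetSum_coeff, Polynomial.coeff_C_mul]
    refine AddSubgroup.sum_mem _ fun k _ => ?_
    by_cases hik : k < i
    · rw [Polynomial.coeff_eq_zero_of_natDegree_lt (by rwa [descPochhammer_natDegree])]
      simp
    · obtain ⟨a, ha, hae⟩ := mem_pIdeal.1 (han_fact A p hp hp2 hA e k (by omega))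
      rw [mem_pIdeal, ← hae, ← descPochhammer_map (Int.castRingHom ℂ), Polynomial.coeff_map]
      refine ⟨d k * a * ((descPochhammer ℤ k).coeff i : ℤ), A.mul_mem (A.mul_mem (hd k) ha) (by simp), ?_⟩
      simp
      ring

lemma emb_order {R : Type*} [CommRing R] (p : ℕ) [Fact p.Prime] (hpR : (p:R) = 0) (x : R)
    (hx : IsIntegral ℤ x) (hu : IsUnit x) : ∃ N : ℕ, 0 < N ∧ x ^ N = 1 := by
  let : Algebra (ZMod p) R := ZMod.algebra' R (ringChar R) (ringChar.dvd hpR)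
  have h1 : IsIntegral (ZMod p) x := hx.tower_top
  have : Module.Finite (ZMod p) (Algebra.adjoin (ZMod p) {x}) :=
    Module.Finite.iff_fg.2 h1.fg_adjoin_singleton
  have : Finite (Algebra.adjoin (ZMod p) {x}) := Module.finite_of_finite (ZMod p)
  let x' : Algebra.adjoin (ZMod p) {x} := ⟨x, Algebra.subset_adjoin rfl⟩
  obtain ⟨i, j, hij, h⟩ := Finite.exists_ne_map_eq_of_infinite (fun n : ℕ => x' ^ n)
  have h' : x ^ i = x ^ j := by simpa [x'] using congrArg Subtype.val h
  have key : ∀ i j : ℕ, i < j → x ^ i = x ^ j → x ^ (j - i) = 1 := by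
    intro i j hij h
    have := (hu.pow i).mul_left_cancel (b := x^(j-i)) (c := 1)
    apply this
    rw [← pow_add, mul_one, h]
    congr 1; omega
  rcases lt_or_gt_of_ne hij with hl | hl
  · exact ⟨j - i, by omega, key i j hl h'⟩
  · exact ⟨i - j, by omega, key j i hl h'.symm⟩

def embA {r : ℕ} (φ : MvPolynomial (Fin r) ℤ →+* ℂ) (p : ℕ) (hp : p.Prime) : Subring ℂ where
  carrier := {x | ∃ m : ℕ, ¬ p ∣ m ∧ φ.IsIntegralElem (m * x)}
  zero_mem' := ⟨1, hp.one_lt.ne' ∘ Nat.dvd_one.1, by simpa using φ.isIntegralElem_zero⟩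
  one_mem' := ⟨1, hp.one_lt.ne' ∘ Nat.dvd_one.1, by simpa using φ.isIntegralElem_one⟩
  add_mem' := by
    rintro x y ⟨m, hm, hx⟩ ⟨n, hn, hy⟩
    refine ⟨m * n, by simp [hp.dvd_mul, hm, hn], ?_⟩
    have h1 : φ.IsIntegralElem (n:ℂ) := by simpa using φ.isIntegralElem_map (x := (n : MvPolynomial (Fin r) ℤ))
    have h2 : φ.IsIntegralElem (m:ℂ) := by simpa using φ.isIntegralElem_map (x := (m : MvPolynomial (Fin r) ℤ))
    have := (h1.mul φ hx).add φ (h2.mul φ hy)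
    have e : ((m * n : ℕ) : ℂ) * (x + y) = n * (m * x) + m * (n * y) := by push_cast; ring
    rw [e]; exact this
  mul_mem' := by
    rintro x y ⟨m, hm, hx⟩ ⟨n, hn, hy⟩
    refine ⟨m * n, by simp [hp.dvd_mul, hm, hn], ?_⟩
    have := hx.mul φ hy
    have e : ((m * n : ℕ) : ℂ) * (x * y) = (m * x) * (n * y) := by push_cast; ring
    rw [e]; exact this
  neg_mem' := by
    rintro x ⟨m, hm, hx⟩
    refine ⟨m, hm, ?_⟩
    have := hx.neg φ
    have e : (m : ℂ) * (-x) = -(m * x) := by ring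
    rw [e]; exact this

lemma emb_sep {r : ℕ} (φ : MvPolynomial (Fin r) ℤ →+* ℂ) (hφ : Function.Injective φ)
    (p : ℕ) (hp : p.Prime) (x : ℂ)
    (h : ∀ k : ℕ, ∃ a ∈ embA φ p hp, (p:ℂ)^k * a = x) : x = 0 := by
  by_contra hx0
  obtain ⟨a0, ⟨m, hm, hint⟩, ha0⟩ := h 0
  simp at ha0
  subst ha0
  have hm0 : (m:ℂ) ≠ 0 := by
    intro h; apply hm; rw [Nat.cast_eq_zero.1 h]; simp
  let : Algebra (MvPolynomial (Fin r) ℤ) ℂ := φ.toAlgebra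
  have hint' : IsIntegral (MvPolynomial (Fin r) ℤ) ((m:ℂ) * a0) := hint
  let s : integralClosure (MvPolynomial (Fin r) ℤ) ℂ := ⟨_, hint'⟩
  have hs : s ≠ 0 := by
    intro h
    have := congrArg Subtype.val h
    simp [s] at this
    tauto
  have hsa : IsAlgebraic (MvPolynomial (Fin r) ℤ) s := by
    have : Nontrivial (MvPolynomial (Fin r) ℤ) := inferInstance
    exact (integralClosure.isIntegral s).isAlgebraic
  obtain ⟨b, hb, ⟨r', hr'⟩⟩ := hsa.exists_nonzero_dvd (mem_nonZeroDivisors_of_ne_zero hs)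
  have hr2 : φ b = (m:ℂ) * a0 * r'.1 := congrArg Subtype.val hr'
  have key : ∀ k : ℕ, ∃ n : ℕ, ¬ p ∣ n ∧ ((p:MvPolynomial (Fin r) ℤ))^k ∣ (n : MvPolynomial (Fin r) ℤ) * b := by
    intro k
    obtain ⟨a, ⟨n, hn, ha⟩, hak⟩ := h k
    refine ⟨n, hn, ?_⟩
    have hmi : φ.IsIntegralElem (m:ℂ) := by simpa using φ.isIntegralElem_map (x := (m : MvPolynomial (Fin r) ℤ))
    have hy : φ.IsIntegralElem ((m:ℂ) * (n * a) * r'.1) := (hmi.mul φ ha).mul φ r'.2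
    have hy' : IsIntegral (MvPolynomial (Fin r) ℤ) ((m:ℂ) * (n * a) * r'.1) := hy
    have hpk : (p:ℂ)^k * ((m:ℂ) * (n * a) * r'.1) = φ (n * b) := by
      rw [map_mul, hr2, ← hak]; simp; ring
    have hpc : (p:ℂ) ≠ 0 := by exact_mod_cast hp.ne_zero
    -- descend to the fraction field
    let K := FractionRing (MvPolynomial (Fin r) ℤ)
    have hinj : Function.Injective (algebraMap (MvPolynomial (Fin r) ℤ) ℂ) := hφ
    let ψ : K →ₐ[MvPolynomial (Fin r) ℤ] ℂ := IsFractionRing.liftAlgHom (g := Algebra.ofId _ ℂ) hinj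
    have hpK : (algebraMap (MvPolynomial (Fin r) ℤ) K ((p:MvPolynomial (Fin r) ℤ)^k)) ≠ 0 := by
      rw [Ne, FaithfulSMul.algebraMap_eq_zero_iff]
      apply pow_ne_zero
      exact_mod_cast hp.ne_zero
    let q : K := algebraMap _ K (n * b) / algebraMap _ K ((p:MvPolynomial (Fin r) ℤ)^k)
    have hq : ψ q = (m:ℂ) * (n * a) * r'.1 := by
      simp only [q]
      rw [map_div₀, AlgHom.commutes, AlgHom.commutes]
      change φ _ / φ _ = _
      rw [← hpk, map_pow, map_natCast, mul_div_cancel_left₀]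
      exact pow_ne_zero _ hpc
    rw [← hq] at hy'
    have hqi := (isIntegral_algHom_iff ψ ψ.toRingHom.injective).1 hy'
    obtain ⟨w, hw⟩ := IsIntegrallyClosed.isIntegral_iff.1 hqi
    refine ⟨w, ?_⟩
    apply IsFractionRing.injective (MvPolynomial (Fin r) ℤ) K
    rw [map_mul _ _ w, hw]
    simp only [q]
    rw [mul_div_cancel₀ _ hpK]
  obtain ⟨v, hv⟩ := MvPolynomial.ne_zero_iff.1 hb
  have hdiv : ∀ k : ℕ, (p:ℤ)^k ∣ b.coeff v := by
    intro k
    obtain ⟨n, hn, hd⟩ := key k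
    have e1 : ((p:MvPolynomial (Fin r) ℤ))^k = MvPolynomial.C ((p:ℤ)^k) := by simp
    have e2 : (n : MvPolynomial (Fin r) ℤ) * b = MvPolynomial.C (n:ℤ) * b := by simp
    rw [e1, e2, MvPolynomial.C_dvd_iff_dvd_coeff] at hd
    have := hd v
    rw [MvPolynomial.coeff_C_mul] at this
    refine IsCoprime.dvd_of_dvd_mul_left ?_ this
    apply IsCoprime.pow_left
    exact Nat.isCoprime_iff_coprime.2 ((Nat.Prime.coprime_iff_not_dvd hp).2 hn)
  have hfin : FiniteMultiplicity (p:ℤ) (b.coeff v) := by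
    apply Int.finiteMultiplicity_iff.2
    refine ⟨?_, hv⟩
    simpa using hp.one_lt.ne'
  obtain ⟨k, hk⟩ := hfin
  exact hk (hdiv _)

lemma emb (X : Finset ℂ) : ∃ (p : ℕ) (A : Subring ℂ), p.Prime ∧ p ≠ 2 ∧
    (∀ m : ℕ, ¬ p ∣ m → ((m:ℂ))⁻¹ ∈ A) ∧
    (∀ r : ℂ, (∀ k : ℕ, ∃ a ∈ A, (p:ℂ)^k * a = r) → r = 0) ∧
    (∀ x ∈ X, x ∈ A) ∧
    (∀ x ∈ X, x ≠ 0 → x⁻¹ ∈ X → ∃ N : ℕ, 0 < N ∧ ∃ y ∈ A, x ^ N = 1 + p * y) := by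
  classical
  let S := Algebra.adjoin ℚ (X : Set ℂ)
  have hfg : Algebra.FiniteType ℚ S := (Subalgebra.fg_iff_finiteType S).1 ⟨X, rfl⟩
  obtain ⟨r, g, ginj, gint⟩ := exists_integral_inj_algHom_of_fg ℚ S
  let G : MvPolynomial (Fin r) ℚ →+* ℂ := (S.val.comp g : MvPolynomial (Fin r) ℚ →ₐ[ℚ] ℂ).toRingHom
  have Ginj : Function.Injective G := Subtype.val_injective.comp ginj
  let ψ : MvPolynomial (Fin r) ℤ →+* ℂ := G.comp (MvPolynomial.map (Int.castRingHom ℚ))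
  have ψinj : Function.Injective ψ :=
    Ginj.comp (MvPolynomial.map_injective _ (by simpa using Int.cast_injective))
  have h1 : ∀ x ∈ X, ∃ m : ℤ, m ≠ 0 ∧ ψ.IsIntegralElem (m * x) := by
    intro x hx
    have hx1 : G.IsIntegralElem x := by
      have := (gint ⟨x, Algebra.subset_adjoin hx⟩)
      exact RingHom.IsIntegralElem.map this S.val.toRingHom
    let := MvPolynomial.algebraMvPolynomial (σ := Fin r) (R := ℤ) (S := ℚ)
    let : Algebra (MvPolynomial (Fin r) ℚ) ℂ := G.toAlgebra
    let : Algebra (MvPolynomial (Fin r) ℤ) ℂ := ψ.toAlgebra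
    have : IsScalarTower (MvPolynomial (Fin r) ℤ) (MvPolynomial (Fin r) ℚ) ℂ :=
      IsScalarTower.of_algebraMap_eq (fun x => rfl)
    have hx2 : IsIntegral (MvPolynomial (Fin r) ℚ) x := hx1
    obtain ⟨⟨_, m, hm, rfl⟩, hi⟩ := IsIntegral.exists_multiple_integral_of_isLocalization
      ((nonZeroDivisors ℤ).map (MvPolynomial.C (σ := Fin r))) x hx2
    refine ⟨m, nonZeroDivisors.ne_zero hm, ?_⟩
    have e : (m:ℂ) * x = ψ (MvPolynomial.C m) * x := by simp
    rw [e]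
    exact hi
  choose! mm hmm0 hmm using h1
  let M : ℤ := ∏ x ∈ X, mm x
  have hM0 : M ≠ 0 := Finset.prod_ne_zero_iff.2 hmm0
  have hM : ∀ x ∈ X, ψ.IsIntegralElem (M.natAbs * x) := by
    intro x hx
    obtain ⟨q, hq⟩ : mm x ∣ (M.natAbs : ℤ) := by
      rw [Int.dvd_natAbs]
      exact Finset.dvd_prod_of_mem _ hx
    have e : ((M.natAbs : ℕ) : ℂ) * x = ψ (q : MvPolynomial (Fin r) ℤ) * (mm x * x) := by
      have : ((M.natAbs : ℕ) : ℂ) = (mm x : ℂ) * q := by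
        rw [← Int.cast_mul, ← hq, Int.cast_natCast]
      rw [this, map_intCast]; ring
    rw [e]
    exact (ψ.isIntegralElem_map).mul ψ (hmm x hx)
  obtain ⟨p, hpM, hp⟩ := Nat.exists_infinite_primes (M.natAbs + 3)
  have hpdvd : ¬ p ∣ M.natAbs := by
    intro h
    have := Nat.le_of_dvd (by omega) h
    omega
  have hpc : (p:ℂ) ≠ 0 := by exact_mod_cast hp.ne_zero
  have : Fact p.Prime := ⟨hp⟩
  -- scaled map
  let Φ : MvPolynomial (Fin r) ℚ →+* MvPolynomial (Fin r) ℚ :=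
    (MvPolynomial.aeval (fun i => MvPolynomial.C ((p:ℚ)⁻¹) * MvPolynomial.X i) :
      MvPolynomial (Fin r) ℚ →ₐ[ℚ] MvPolynomial (Fin r) ℚ).toRingHom
  let Φ' : MvPolynomial (Fin r) ℚ →+* MvPolynomial (Fin r) ℚ :=
    (MvPolynomial.aeval (fun i => MvPolynomial.C ((p:ℚ)) * MvPolynomial.X i) :
      MvPolynomial (Fin r) ℚ →ₐ[ℚ] MvPolynomial (Fin r) ℚ).toRingHom
  have hpq : (p:ℚ) ≠ 0 := by exact_mod_cast hp.ne_zero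
  have hΦ : Φ'.comp Φ = RingHom.id _ := by
    apply MvPolynomial.ringHom_ext
    · intro q; simp [Φ, Φ']
    · intro i
      simp only [Φ, Φ', RingHom.comp_apply, AlgHom.toRingHom_eq_coe, RingHom.coe_coe,
        MvPolynomial.aeval_X, map_mul, MvPolynomial.algHom_C, RingHom.id_apply,
        MvPolynomial.algebraMap_eq]
      rw [← mul_assoc, ← map_mul, inv_mul_cancel₀ hpq]
      simp
  have Φinj : Function.Injective Φ := by
    apply Function.LeftInverse.injective (g := Φ')
    intro x
    exact congrArg (fun f => f x) hΦ
  let φ : MvPolynomial (Fin r) ℤ →+* ℂ := (G.comp Φ).comp (MvPolynomial.map (Int.castRingHom ℚ))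
  have φinj : Function.Injective φ :=
    (Ginj.comp Φinj).comp (MvPolynomial.map_injective _ (by simpa using Int.cast_injective))
  let Θ : MvPolynomial (Fin r) ℤ →+* MvPolynomial (Fin r) ℤ :=
    (MvPolynomial.aeval (fun i => MvPolynomial.C ((p:ℤ)) * MvPolynomial.X i) :
      MvPolynomial (Fin r) ℤ →ₐ[ℤ] MvPolynomial (Fin r) ℤ).toRingHom
  have hX : ∀ i, ψ (MvPolynomial.X i) = p * φ (MvPolynomial.X i) := by
    intro i
    have : G (MvPolynomial.C ((p:ℚ)⁻¹)) = (p:ℂ)⁻¹ := by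
      have : (MvPolynomial.C ((p:ℚ)⁻¹) : MvPolynomial (Fin r) ℚ) = algebraMap ℚ _ ((p:ℚ)⁻¹) := rfl
      rw [this]
      change (S.val.comp g) _ = _
      rw [AlgHom.commutes]
      simp
    simp only [φ, ψ, Φ, RingHom.comp_apply, MvPolynomial.map_X, AlgHom.toRingHom_eq_coe,
      RingHom.coe_coe, MvPolynomial.aeval_X, map_mul, this]
    field_simp
  have hψφ : ψ = φ.comp Θ := by
    apply MvPolynomial.ringHom_ext
    · intro q; simp
    · intro i
      rw [hX]
      simp [Θ]
  have hint : ∀ z, ψ.IsIntegralElem z → φ.IsIntegralElem z := by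
    intro z hz
    rw [hψφ] at hz
    exact hz.of_comp
  let A := embA φ p hp
  have hAint : ∀ z, φ.IsIntegralElem z → z ∈ A := fun z hz =>
    ⟨1, hp.one_lt.ne' ∘ Nat.dvd_one.1, by simpa using hz⟩
  have hXA : ∀ x ∈ X, x ∈ A := fun x hx => ⟨M.natAbs, hpdvd, hint _ (hM x hx)⟩
  refine ⟨p, A, hp, by omega, ?_, emb_sep φ φinj p hp, hXA, ?_⟩
  · intro m hm
    refine ⟨m, hm, ?_⟩
    have : (m:ℂ) ≠ 0 := by
      intro h; apply hm; rw [Nat.cast_eq_zero.1 h]; simp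
    rw [mul_inv_cancel₀ this]
    exact φ.isIntegralElem_one
  · intro x hx hx0 hxi
    let φA : MvPolynomial (Fin r) ℤ →+* A := φ.codRestrict A (fun b => hAint _ φ.isIntegralElem_map)
    let ψA : MvPolynomial (Fin r) ℤ →+* A := φA.comp Θ
    let I : Ideal A := Ideal.span {(p : A)}
    have hpI : Ideal.Quotient.mk I (p : A) = 0 :=
      Ideal.Quotient.eq_zero_iff_mem.2 (Ideal.subset_span rfl)
    have hpI' : (p : A ⧸ I) = 0 := by simpa using hpI
    have hcomp : (Ideal.Quotient.mk I).comp ψA =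
        (Int.castRingHom (A ⧸ I)).comp (MvPolynomial.constantCoeff) := by
      apply MvPolynomial.ringHom_ext
      · intro q; simp
      · intro i
        simp [ψA, Θ, hpI']
    let xA : A := ⟨x, hXA x hx⟩
    have hy1 : ψA.IsIntegralElem ((M.natAbs : A) * xA) := by
      obtain ⟨P, hP, hP2⟩ := hM x hx
      refine ⟨P, hP, ?_⟩
      apply Subtype.val_injective
      have := Polynomial.hom_eval₂ P ψA A.subtype ((M.natAbs : A) * xA)
      have e : A.subtype.comp ψA = ψ := by rw [hψφ]; rfl
      rw [e] at this
      refine this.trans ?_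
      refine Eq.trans ?_ hP2
      simp [xA]
    have hy2 : ((Ideal.Quotient.mk I).comp ψA).IsIntegralElem
        (Ideal.Quotient.mk I ((M.natAbs : A) * xA)) := hy1.map (Ideal.Quotient.mk I)
    rw [hcomp] at hy2
    have hy3 : IsIntegral ℤ (Ideal.Quotient.mk I ((M.natAbs : A) * xA)) := hy2.of_comp
    have hcop : IsCoprime (p:ℤ) (M.natAbs:ℤ) :=
      Nat.isCoprime_iff_coprime.2 ((Nat.Prime.coprime_iff_not_dvd hp).2 hpdvd)
    obtain ⟨u, v, huv⟩ := hcop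
    have huv' : (v : A ⧸ I) * (M.natAbs : A ⧸ I) = 1 := by
      have := congrArg (Int.cast : ℤ → A ⧸ I) huv
      rw [Int.cast_add, Int.cast_mul, Int.cast_mul, Int.cast_natCast, Int.cast_natCast, hpI'] at this
      simpa using this
    have hxint : IsIntegral ℤ (Ideal.Quotient.mk I xA) := by
      have h5 : IsIntegral ℤ (v : A ⧸ I) := isIntegral_algebraMap (R := ℤ) (x := v)
      have := h5.mul hy3
      rwa [map_mul, ← mul_assoc, map_natCast, huv', one_mul] at this
    have hunit : IsUnit (Ideal.Quotient.mk I xA) := by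
      refine IsUnit.map _ (IsUnit.of_mul_eq_one ⟨x⁻¹, hXA _ hxi⟩ ?_)
      apply Subtype.val_injective
      simp [xA, hx0]
    obtain ⟨N, hN, hN1⟩ := emb_order p hpI' _ hxint hunit
    refine ⟨N, hN, ?_⟩
    rw [← map_pow, ← map_one (Ideal.Quotient.mk I), Ideal.Quotient.eq,
      Ideal.mem_span_singleton] at hN1
    obtain ⟨y, hy⟩ := hN1
    refine ⟨y.1, y.2, ?_⟩
    have := congrArg Subtype.val hy
    simp [xA] at this
    rw [← this]; ring

-- SML
lemma sml {ι : Type*} (s : Finset ι) (c w : ι → ℂ) (hw : ∀ j ∈ s, w j ≠ 0)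
    (hinf : {n : ℤ | ∑ j ∈ s, c j * (w j) ^ n = 0}.Infinite) :
    ∃ a d : ℤ, d ≠ 0 ∧ ∀ k : ℕ, ∑ j ∈ s, c j * (w j) ^ (a + d * k) = 0 := by
  classical
  have pos : ∀ (w : ι → ℂ), (∀ j ∈ s, w j ≠ 0) →
      {n : ℕ | ∑ j ∈ s, c j * (w j) ^ n = 0}.Infinite →
      ∃ a d : ℕ, d ≠ 0 ∧ ∀ k : ℕ, ∑ j ∈ s, c j * (w j) ^ (a + d * k) = 0 := by
    intro w hw hinf
    obtain ⟨p, A, hp, hp2, hA, hsep, hX, hN⟩ :=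
      emb (s.image c ∪ s.image w ∪ s.image (fun j => (w j)⁻¹))
    have hcA : ∀ j ∈ s, c j ∈ A := fun j hj => hX _ (by
      simp only [Finset.mem_union, Finset.mem_image]; exact Or.inl (Or.inl ⟨j, hj, rfl⟩))
    have hwA : ∀ j ∈ s, w j ∈ A := fun j hj => hX _ (by
      simp only [Finset.mem_union, Finset.mem_image]; exact Or.inl (Or.inr ⟨j, hj, rfl⟩))
    have hN' : ∀ j ∈ s, ∃ N : ℕ, 0 < N ∧ ∃ y ∈ A, (w j) ^ N = 1 + p * y := fun j hj =>
      hN _ (by simp only [Finset.mem_union, Finset.mem_image]; exact Or.inl (Or.inr ⟨j, hj, rfl⟩))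
        (hw j hj)
        (by simp only [Finset.mem_union, Finset.mem_image]; exact Or.inr ⟨j, hj, rfl⟩)
    choose! N hN0 y hy hNy using hN'
    let D := ∏ j ∈ s, N j
    have hD : D ≠ 0 := Finset.prod_ne_zero_iff.2 fun j hj => (hN0 j hj).ne'
    have hpow : ∀ j ∈ s, ∃ y' ∈ A, (w j) ^ D = 1 + p * y' := by
      intro j hj
      obtain ⟨q, hq⟩ : N j ∣ D := Finset.dvd_prod_of_mem _ hj
      have h1 : ((1:A) + p * ⟨y j, hy j hj⟩ - 1) ∣ ((1:A) + p * ⟨y j, hy j hj⟩)^q - 1 ^ q :=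
        sub_dvd_pow_sub_pow _ _ q
      obtain ⟨z, hz⟩ := h1
      refine ⟨y j * z.1, A.mul_mem (hy j hj) z.2, ?_⟩
      have h2 := congrArg Subtype.val hz
      simp at h2
      rw [hq, pow_mul, hNy j hj, sub_eq_iff_eq_add.1 h2]
      ring
    choose! y' hy' hDy using hpow
    -- pigeonhole
    obtain ⟨a, ha⟩ : ∃ a : ℕ, {k : ℕ | ∑ j ∈ s, c j * (w j) ^ (a + D * k) = 0}.Infinite := by
      by_contra hcon
      push Not at hcon
      apply hinf
      have hsub : {n : ℕ | ∑ j ∈ s, c j * (w j) ^ n = 0} ⊆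
          ⋃ a ∈ Finset.range D, (fun k => a + D * k) ''
            {k : ℕ | ∑ j ∈ s, c j * (w j) ^ (a + D * k) = 0} := by
        intro n hn
        simp only [Set.mem_iUnion, Finset.mem_range]
        refine ⟨n % D, Nat.mod_lt _ (Nat.pos_of_ne_zero hD), n / D, ?_, Nat.mod_add_div n D⟩
        simpa [Nat.mod_add_div] using hn
      refine Set.Finite.subset ?_ hsub
      refine Set.Finite.biUnion (Finset.finite_toSet _) fun a _ => Set.Finite.image _ ?_
      simpa using hcon a
    refine ⟨a, D, hD, ?_⟩
    have e : ∀ k : ℕ, ∑ j ∈ s, c j * (w j) ^ (a + D * k) =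
        ∑ j ∈ s, (c j * (w j)^a) * (1 + p * y' j) ^ k := by
      intro k
      refine Finset.sum_congr rfl fun j hj => ?_
      rw [← hDy j hj, pow_add, pow_mul]; ring
    simp only [e] at ha ⊢
    exact hansel s A p hp hp2 hA hsep _ y'
      (fun j hj => A.mul_mem (hcA j hj) (A.pow_mem (hwA j hj) _)) hy' ha
  have hsplit : {n : ℕ | ∑ j ∈ s, c j * (w j) ^ n = 0}.Infinite ∨
      {n : ℕ | ∑ j ∈ s, c j * ((w j)⁻¹) ^ n = 0}.Infinite := by
    by_contra hcon
    simp only [not_or, Set.not_infinite] at hcon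
    apply hinf
    refine ((hcon.1.image (fun n : ℕ => (n:ℤ))).union
      (hcon.2.image (fun n : ℕ => -(n:ℤ)))).subset ?_
    intro n hn
    rcases Int.eq_nat_or_neg n with ⟨m, rfl | rfl⟩
    · left; exact ⟨m, by simpa using hn, rfl⟩
    · right; exact ⟨m, by simpa using hn, rfl⟩
  rcases hsplit with h | h
  · obtain ⟨a, d, hd, hk⟩ := pos w hw h
    refine ⟨a, d, by exact_mod_cast hd, fun k => ?_⟩
    rw [← hk k]
    refine Finset.sum_congr rfl fun j hj => ?_
    norm_cast
  · obtain ⟨a, d, hd, hk⟩ := pos (fun j => (w j)⁻¹) (fun j hj => inv_ne_zero (hw j hj)) h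
    refine ⟨-a, -d, by simpa using hd, fun k => ?_⟩
    rw [← hk k]
    refine Finset.sum_congr rfl fun j hj => ?_
    rw [inv_pow, ← zpow_natCast, ← zpow_neg]
    congr 2
    push_cast; ring

lemma ep_mono (l m : ℂ) : IsExpPoly (fun z => l * Complex.exp (m * z)) :=
  ⟨1, fun _ => l, fun _ => m, fun z => by simp⟩

lemma ep_add {f g : ℂ → ℂ} (hf : IsExpPoly f) (hg : IsExpPoly g) : IsExpPoly (f + g) := by
  obtain ⟨N, l, m, h⟩ := hf
  obtain ⟨N', l', m', h'⟩ := hg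
  refine ⟨N + N', Fin.append l l', Fin.append m m', fun z => ?_⟩
  rw [Fin.sum_univ_add]
  simp [h, h']

lemma ep_zero : IsExpPoly 0 := ⟨0, fun _ => 0, fun _ => 0, fun z => by simp⟩

lemma ep_sum {ι : Type*} (s : Finset ι) (F : ι → ℂ → ℂ) (h : ∀ i ∈ s, IsExpPoly (F i)) :
    IsExpPoly (∑ i ∈ s, F i) :=
  Finset.sum_induction F IsExpPoly (fun _ _ => ep_add) ep_zero h

lemma ep_mono_mul (l m : ℂ) {f : ℂ → ℂ} (hf : IsExpPoly f) :
    IsExpPoly (fun z => l * Complex.exp (m * z) * f z) := by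
  obtain ⟨N, l', m', h⟩ := hf
  refine ⟨N, fun i => l * l' i, fun i => m + m' i, fun z => ?_⟩
  change l * Complex.exp (m * z) * f z = ∑ i, l * l' i * Complex.exp ((m + m' i) * z)
  rw [h, Finset.mul_sum]
  refine Finset.sum_congr rfl fun i _ => ?_
  rw [add_mul, Complex.exp_add]; ring

lemma edvd_add {h f g : ℂ → ℂ} (hf : EDvd h f) (hg : EDvd h g) : EDvd h (f + g) := by
  obtain ⟨q, hq, rfl⟩ := hf
  obtain ⟨q', hq', rfl⟩ := hg
  exact ⟨q + q', ep_add hq hq', by rw [mul_add]⟩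

lemma edvd_sum {ι : Type*} (s : Finset ι) (h : ℂ → ℂ) (F : ι → ℂ → ℂ)
    (hF : ∀ i ∈ s, EDvd h (F i)) : EDvd h (∑ i ∈ s, F i) :=
  Finset.sum_induction F (EDvd h) (fun _ _ => edvd_add) ⟨0, ep_zero, by simp⟩ hF

lemma edvd_mono_mul (l m : ℂ) {h f : ℂ → ℂ} (hf : EDvd h f) :
    EDvd h (fun z => l * Complex.exp (m * z) * f z) := by
  obtain ⟨q, hq, rfl⟩ := hf
  refine ⟨_, ep_mono_mul l m hq, ?_⟩
  funext z
  simp; ring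

lemma edvd_pow_nat (γ z₁ : ℂ) (n : ℕ) :
    EDvd (fun z => Complex.exp (γ * z) - Complex.exp (γ * z₁))
      (fun z => Complex.exp (n * (γ * (z - z₁))) - 1) := by
  refine ⟨_, ep_sum (Finset.range n)
    (fun (i : ℕ) z => (Complex.exp (-(γ * z₁)) * Complex.exp (-(i * (γ * z₁)))) * Complex.exp ((i * γ) * z))
    (fun i _ => ep_mono _ _), ?_⟩
  funext z
  have e1 : ∀ i : ℕ, (Complex.exp (-(γ * z₁)) * Complex.exp (-(i * (γ * z₁)))) * Complex.exp ((i * γ) * z)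
      = Complex.exp (-(γ * z₁)) * (Complex.exp (γ * (z - z₁)))^i := by
    intro i
    rw [← Complex.exp_nat_mul, ← Complex.exp_add, ← Complex.exp_add, ← Complex.exp_add]
    congr 1; ring
  simp only [Pi.mul_apply, Finset.sum_apply, e1]
  rw [← Finset.mul_sum, Complex.exp_nat_mul, ← mul_geom_sum, ← mul_assoc]
  congr 1
  rw [sub_mul, ← Complex.exp_add, ← Complex.exp_add]
  simp
  congr 1; ring

lemma edvd_pow_int (γ z₁ : ℂ) (n : ℤ) :
    EDvd (fun z => Complex.exp (γ * z) - Complex.exp (γ * z₁))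
      (fun z => Complex.exp (n * (γ * (z - z₁))) - 1) := by
  rcases Int.eq_nat_or_neg n with ⟨m, rfl | rfl⟩
  · simpa using edvd_pow_nat γ z₁ m
  · have := edvd_mono_mul (-Complex.exp (m * (γ * z₁))) (-(m*γ)) (edvd_pow_nat γ z₁ m)
    convert this using 1
    funext z
    have : -Complex.exp (m * (γ * z₁)) * Complex.exp (-(m*γ) * z) = - Complex.exp (-(m * (γ * (z - z₁)))) := by
      rw [neg_mul, ← Complex.exp_add]; congr 2; ring
    rw [this, neg_mul, mul_sub (Complex.exp _), ← Complex.exp_add]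
    simp

lemma class_sum {ι : Type*} (s : Finset ι) (a w : ι → ℂ)
    (h : ∀ k : ℕ, ∑ j ∈ s, a j * (w j)^k = 0) (F : ℂ → ℂ) : ∑ j ∈ s, a j * F (w j) = 0 := by
  classical
  have hP : ∀ P : Polynomial ℂ, ∑ j ∈ s, a j * P.eval (w j) = 0 := by
    intro P
    simp only [Polynomial.eval_eq_sum_range, Finset.mul_sum]
    rw [Finset.sum_comm]
    refine Finset.sum_eq_zero fun k _ => ?_
    have := congrArg (fun x => P.coeff k * x) (h k)
    simp only [Finset.mul_sum, mul_zero] at this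
    rw [← this]
    exact Finset.sum_congr rfl fun j _ => by ring
  rw [← hP (Lagrange.interpolate (s.image w) id F)]
  refine Finset.sum_congr rfl fun j hj => ?_
  have := Lagrange.eval_interpolate_at_node F (s := s.image w) (v := id) (fun x _ y _ h => h)
    (Finset.mem_image_of_mem w hj)
  simp only [id] at this
  rw [this]

lemma edvd_of_zeros {F : ℂ → ℂ} (hF : IsExpPoly F) (γ z₁ : ℂ) (hγ : γ ≠ 0)
    (h : ∀ k : ℕ, F (z₁ + k * (2 * Real.pi * Complex.I) / γ) = 0) :
    EDvd (fun z => Complex.exp (γ * z) - Complex.exp (γ * z₁)) F := by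
  classical
  obtain ⟨N, l, m, hF⟩ := hF
  let a : Fin N → ℂ := fun j => l j * Complex.exp (m j * z₁)
  let w : Fin N → ℂ := fun j => Complex.exp (2 * Real.pi * Complex.I * m j / γ)
  have h1 : ∀ k : ℕ, ∑ j, a j * (w j)^k = 0 := by
    intro k
    rw [← h k, hF]
    refine Finset.sum_congr rfl fun j _ => ?_
    simp only [a, w]
    rw [← Complex.exp_nat_mul, mul_assoc, ← Complex.exp_add]
    congr 2
    field_simp
  -- representatives
  let ρ : ℂ → ℂ := fun x => if hx : ∃ j, w j = x then m hx.choose else 0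
  have hρ : ∀ j, ∃ n : ℤ, m j = ρ (w j) + n * γ := by
    intro j
    have hx : ∃ i, w i = w j := ⟨j, rfl⟩
    have e : ρ (w j) = m hx.choose := by simp only [ρ]; rw [dif_pos hx]
    rw [e]
    have h2 := hx.choose_spec
    set i := hx.choose
    obtain ⟨n, hn⟩ := Complex.exp_eq_exp_iff_exists_int.1 h2.symm
    refine ⟨n, ?_⟩
    have hpi : (2 * Real.pi * Complex.I : ℂ) ≠ 0 := Complex.two_pi_I_ne_zero
    apply mul_left_cancel₀ hpi
    field_simp at hn
    linear_combination (2 * Real.pi * Complex.I : ℂ) * hn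
  choose n hn using hρ
  have hFe : F = ∑ j, fun z => (a j * Complex.exp (-(ρ (w j)) * z₁)) * Complex.exp (ρ (w j) * z) *
      (Complex.exp (n j * (γ * (z - z₁))) - 1) := by
    funext z
    rw [Finset.sum_apply]
    have h3 := class_sum Finset.univ a w h1 (fun x => Complex.exp (ρ x * (z - z₁)))
    rw [hF, ← sub_zero (∑ i, l i * _), ← h3, ← Finset.sum_sub_distrib]
    refine Finset.sum_congr rfl fun j _ => ?_
    have e1 : l j * Complex.exp (m j * z) =
        a j * (Complex.exp (ρ (w j) * (z - z₁)) * Complex.exp (n j * (γ * (z - z₁)))) := by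
      simp only [a]
      rw [mul_assoc, ← Complex.exp_add, ← Complex.exp_add]
      congr 2
      linear_combination (z - z₁) * hn j
    have e2 : Complex.exp (-(ρ (w j)) * z₁) * Complex.exp (ρ (w j) * z) =
        Complex.exp (ρ (w j) * (z - z₁)) := by
      rw [← Complex.exp_add]; congr 1; ring
    rw [e1, mul_assoc (a j), e2]; ring
  rw [hFe]
  exact edvd_sum _ _ _ fun j _ => edvd_mono_mul _ _ (edvd_pow_int _ _ _)

lemma simple_form {N : ℕ} (mu : Fin N → ℂ)
    (h : Module.finrank ℚ (Submodule.span ℚ (Set.range mu)) = 1) :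
    ∃ β : ℂ, β ≠ 0 ∧ ∀ i, ∃ k : ℤ, mu i = k * β := by
  classical
  obtain ⟨v, hv0, hv⟩ := finrank_eq_one_iff'.1 h
  have h1 : ∀ i, ∃ c : ℚ, mu i = c * (v:ℂ) := by
    intro i
    obtain ⟨c, hc⟩ := hv ⟨mu i, Submodule.subset_span ⟨i, rfl⟩⟩
    refine ⟨c, ?_⟩
    have := congrArg Subtype.val hc
    simp [Rat.smul_def] at this
    exact this.symm
  choose c hc using h1
  obtain ⟨⟨b, hb⟩, hbi⟩ := IsLocalization.exist_integer_multiples_of_finset (nonZeroDivisors ℤ)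
    (Finset.univ.image c)
  have hb0 : b ≠ 0 := nonZeroDivisors.ne_zero hb
  have hbc : (b:ℂ) ≠ 0 := by exact_mod_cast hb0
  refine ⟨v / b, div_ne_zero (by simpa using hv0) hbc, fun i => ?_⟩
  obtain ⟨k, hk⟩ := hbi (c i) (Finset.mem_image_of_mem _ (Finset.mem_univ i))
  refine ⟨k, ?_⟩
  have hk' : (k:ℂ) = b * (c i : ℂ) := by
    have : (k:ℚ) = b * c i := by simpa using hk
    exact_mod_cast congrArg (Rat.cast : ℚ → ℂ) this
  rw [hc, hk']
  field_simp

lemma simple_poly {N : ℕ} (lam : Fin N → ℂ) (k : Fin N → ℤ) (hl : ∀ i, lam i ≠ 0)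
    (hk : Function.Injective k) (hN : 0 < N) :
    {w : ℂ | w ≠ 0 ∧ ∑ i, lam i * w ^ (k i) = 0}.Finite := by
  classical
  let K : ℕ := ∑ i, (k i).natAbs
  have hK : ∀ i, 0 ≤ k i + K := by
    intro i
    have : (k i).natAbs ≤ K := Finset.single_le_sum (f := fun i => (k i).natAbs) (fun _ _ => Nat.zero_le _) (Finset.mem_univ i)
    omega
  let P : Polynomial ℂ := ∑ i, Polynomial.C (lam i) * Polynomial.X ^ (k i + K).toNat
  have hP : P ≠ 0 := by
    intro h0
    have := congrArg (fun Q => Polynomial.coeff Q (k ⟨0, hN⟩ + K).toNat) h0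
    simp only [P, Polynomial.finsetSum_coeff, Polynomial.coeff_C_mul, Polynomial.coeff_X_pow, Polynomial.coeff_zero] at this
    rw [Finset.sum_eq_single ⟨0, hN⟩] at this
    · simp at this
      exact hl _ this
    · intro i _ hi
      rw [if_neg, mul_zero]
      intro he
      apply hi
      apply hk
      have h1 := hK i
      have h2 := hK ⟨0, hN⟩
      omega
    · simp
  refine (P.roots.toFinset.finite_toSet).subset ?_
  rintro w ⟨hw, hs⟩
  simp only [Finset.mem_coe, Multiset.mem_toFinset, Polynomial.mem_roots hP, Polynomial.IsRoot.def]
  simp only [P, Polynomial.eval_finsetSum, Polynomial.eval_mul, Polynomial.eval_C, Polynomial.eval_pow, Polynomial.eval_X]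
  have e : ∀ i, lam i * w ^ (k i + K).toNat = (lam i * w ^ (k i)) * w ^ K := by
    intro i
    rw [mul_assoc]
    congr 1
    rw [← zpow_natCast, ← zpow_natCast, ← zpow_add₀ hw, Int.toNat_of_nonneg (hK i)]
  simp only [e]
  rw [← Finset.sum_mul, hs, zero_mul]

/-- If `f` is simple and `g` is a nonzero exponential polynomial with infinitely many common
zeros with `f`, then `f` and `g` have a common non-unit divisor with infinitely many zeros. -/
theorem shapiro_simple_case
    (f g : ℂ → ℂ) (hf : IsSimple f) (hg : IsExpPoly g) (hg0 : g ≠ 0)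
    (hinf : {z : ℂ | f z = 0 ∧ g z = 0}.Infinite) :
    ∃ h : ℂ → ℂ, IsExpPoly h ∧ ¬ EUnit h ∧ {z : ℂ | h z = 0}.Infinite ∧
      EDvd h f ∧ EDvd h g := by
  obtain ⟨N, lam, mu, ⟨hl, hmu, hfe⟩, hrank⟩ := hf
  have hN : 0 < N := by
    rcases Nat.eq_zero_or_pos N with rfl | h
    · rw [Set.range_eq_empty, Submodule.span_empty] at hrank
      simp at hrank
    · exact h
  obtain ⟨β, hβ, hk⟩ := simple_form mu hrank
  choose k hk using hk
  have hkinj : Function.Injective k := by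
    intro i j hij
    apply hmu
    rw [hk, hk, hij]
  have hfz : ∀ z, f z = ∑ i, lam i * (Complex.exp (β * z)) ^ (k i) := by
    intro z
    rw [hfe]
    refine Finset.sum_congr rfl fun i _ => ?_
    rw [← Complex.exp_int_mul, hk, mul_assoc]
  have hfin := simple_poly lam k hl hkinj hN
  obtain ⟨r, hr⟩ : ∃ r : ℂ, {z : ℂ | (f z = 0 ∧ g z = 0) ∧ Complex.exp (β * z) = r}.Infinite := by
    by_contra hcon
    push Not at hcon
    apply hinf
    refine (Set.Finite.biUnion hfin fun r _ => hcon r).subset ?_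
    intro z hz
    simp only [Set.mem_iUnion]
    refine ⟨Complex.exp (β * z), ⟨Complex.exp_ne_zero _, ?_⟩, hz, rfl⟩
    rw [← hfz]; exact hz.1
  obtain ⟨z₀, ⟨hf0, -⟩, hz₀r⟩ := hr.nonempty
  have hgE := hg
  obtain ⟨N', lam', mu', hge⟩ := hg
  let c : Fin N' → ℂ := fun j => lam' j * Complex.exp (mu' j * z₀)
  let w : Fin N' → ℂ := fun j => Complex.exp (2 * Real.pi * Complex.I * mu' j / β)
  have hgn : ∀ n : ℤ, g (z₀ + n * (2 * Real.pi * Complex.I) / β) = ∑ j, c j * (w j)^n := by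
    intro n
    rw [hge]
    refine Finset.sum_congr rfl fun j _ => ?_
    simp only [c, w]
    rw [← Complex.exp_int_mul, mul_assoc (lam' j), ← Complex.exp_add]
    congr 2
    field_simp
  have hinfZ : {n : ℤ | ∑ j, c j * (w j)^n = 0}.Infinite := by
    intro hfinZ
    apply hr
    refine (hfinZ.image (fun n : ℤ => z₀ + n * (2 * Real.pi * Complex.I) / β)).subset ?_
    rintro z ⟨⟨-, hgz⟩, hzr⟩
    rw [← hz₀r] at hzr
    obtain ⟨n, hn⟩ := Complex.exp_eq_exp_iff_exists_int.1 hzr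
    have hz : z = z₀ + n * (2 * Real.pi * Complex.I) / β := by
      field_simp
      linear_combination hn
    refine ⟨n, ?_, hz.symm⟩
    change ∑ j, c j * (w j)^n = 0
    rw [← hgn, ← hz, hgz]
  obtain ⟨a, d, hd, had⟩ := sml Finset.univ c w (fun j _ => Complex.exp_ne_zero _) hinfZ
  have hdc : (d:ℂ) ≠ 0 := by exact_mod_cast hd
  let z₁ : ℂ := z₀ + a * (2 * Real.pi * Complex.I) / β
  let γ : ℂ := β / d
  have hγ : γ ≠ 0 := div_ne_zero hβ hdc
  have hpt : ∀ k : ℕ, z₁ + k * (2 * Real.pi * Complex.I) / γ =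
      z₀ + ((a + d * k : ℤ) : ℂ) * (2 * Real.pi * Complex.I) / β := by
    intro k
    simp only [z₁, γ]
    push_cast
    field_simp
    ring
  have hh0 : ∀ k : ℕ, Complex.exp (γ * (z₁ + k * (2 * Real.pi * Complex.I) / γ)) -
      Complex.exp (γ * z₁) = 0 := by
    intro k
    rw [sub_eq_zero, Complex.exp_eq_exp_iff_exists_int]
    refine ⟨k, ?_⟩
    push_cast
    field_simp
  refine ⟨fun z => Complex.exp (γ * z) - Complex.exp (γ * z₁), ?_, ?_, ?_, ?_, ?_⟩
  · refine ⟨2, ![1, -Complex.exp (γ * z₁)], ![γ, 0], fun z => ?_⟩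
    simp [Fin.sum_univ_two]
    ring
  · rintro ⟨-, q, -, hq⟩
    have := congrFun hq z₁
    simp at this
  · have hinj : Function.Injective (fun k : ℕ => z₁ + k * (2 * Real.pi * Complex.I) / γ) := by
      intro i j hij
      have hpi : (2 * Real.pi * Complex.I : ℂ) ≠ 0 := Complex.two_pi_I_ne_zero
      have h1 := add_left_cancel hij
      rw [div_left_inj' hγ] at h1
      exact_mod_cast mul_right_cancel₀ hpi h1
    refine (Set.infinite_range_of_injective hinj).mono ?_
    rintro _ ⟨k, rfl⟩
    exact hh0 k
  · refine edvd_of_zeros ⟨N, lam, mu, hfe⟩ γ z₁ hγ fun k => ?_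
    rw [hpt, hfz, ← hf0, hfz]
    have : Complex.exp (β * (z₀ + ((a + d * k : ℤ) : ℂ) * (2 * Real.pi * Complex.I) / β)) =
        Complex.exp (β * z₀) := by
      rw [Complex.exp_eq_exp_iff_exists_int]
      refine ⟨a + d * k, ?_⟩
      field_simp
    rw [this]
  · refine edvd_of_zeros hgE γ z₁ hγ fun k => ?_
    rw [hpt, hgn, had]
end
end

section
/- Let f ∈ 𝓔 be an exponential polynomial that vanishes at infinitely many integers. Then there exist a positive integer Δ and a nonempty set of residues d₁,…,d_l modulo Δ such that f(n) = 0 for every integer n congruent to some d_i modulo Δ, and the set of integers n with f(n) = 0 that are not congruent to any d_i modulo Δ is finite. (Skolem–Mahler–Lech theorem for exponential polynomials.) -/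
open Complex Set

noncomputable section

theorem sml_affine {K ι : Type*} [Field K] [CharZero K] {s : ι → K}
    (hs : AlgebraicIndependent ℚ s) (N c : ι → ℚ) (hN : ∀ i, N i ≠ 0) :
    AlgebraicIndependent ℚ (fun i => algebraMap ℚ K (N i) * s i + algebraMap ℚ K (c i)) := by
  have h1 : (MvPolynomial.aeval (R := ℚ)
      (fun i => algebraMap ℚ K (N i) * s i + algebraMap ℚ K (c i))) =
      (MvPolynomial.aeval s).comp (MvPolynomial.aeval
        (fun i => MvPolynomial.C (N i) * MvPolynomial.X i + MvPolynomial.C (c i))) := by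
    ext i; simp
  have h2 : (MvPolynomial.aeval (R := ℚ)
        (fun i : ι => MvPolynomial.C (N i)⁻¹ * (MvPolynomial.X i - MvPolynomial.C (c i)))).comp
        (MvPolynomial.aeval
        (fun i => MvPolynomial.C (N i) * MvPolynomial.X i + MvPolynomial.C (c i))) =
      AlgHom.id ℚ (MvPolynomial ι ℚ) := by
    apply MvPolynomial.algHom_ext
    intro i
    simp only [AlgHom.comp_apply, MvPolynomial.aeval_X, map_add, map_mul, MvPolynomial.aeval_C,
      MvPolynomial.algebraMap_eq, AlgHom.id_apply]
    rw [← mul_assoc, ← MvPolynomial.C_mul, mul_inv_cancel₀ (hN i)]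
    simp
  rw [AlgebraicIndependent, h1]
  simp only [AlgHom.coe_comp]
  refine Function.Injective.comp hs (Function.LeftInverse.injective (g := MvPolynomial.aeval (R := ℚ)
        (fun i : ι => MvPolynomial.C (N i)⁻¹ * (MvPolynomial.X i - MvPolynomial.C (c i)))) ?_)
  intro P
  exact congrArg (fun f => f P) h2

theorem sml_congr {K ι : Type*} [NormedField K] [IsUltrametricDist K] (τ : ι → K) (c : ι → ℤ)
    (h : ∀ i, ‖τ i - c i‖ < 1) (P : MvPolynomial ι ℤ) :
    ‖MvPolynomial.aeval τ P - ((MvPolynomial.eval c P : ℤ) : K)‖ < 1 := by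
  induction P using MvPolynomial.induction_on with
  | C a => simp
  | add P Q hP hQ =>
    have := IsUltrametricDist.norm_add_le_max (MvPolynomial.aeval τ P - ((MvPolynomial.eval c P : ℤ) : K)) (MvPolynomial.aeval τ Q - ((MvPolynomial.eval c Q : ℤ) : K))
    refine lt_of_le_of_lt (le_trans (le_of_eq ?_) this) (max_lt hP hQ)
    congr 1; simp; ring
  | mul_X P i hP =>
    have hτ : ‖τ i‖ ≤ 1 := by
      have := IsUltrametricDist.norm_add_le_max (τ i - c i) (c i : K)
      rw [sub_add_cancel] at this
      exact this.trans (max_le (h i).le (IsUltrametricDist.norm_intCast_le_one K _))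
    have := IsUltrametricDist.norm_add_le_max ((MvPolynomial.aeval τ P - ((MvPolynomial.eval c P : ℤ) : K)) * τ i) (((MvPolynomial.eval c P : ℤ) : K) * (τ i - c i))
    refine lt_of_le_of_lt (le_trans (le_of_eq ?_) this) (max_lt ?_ ?_)
    · congr 1; simp; ring
    · rw [norm_mul]
      exact lt_of_le_of_lt (mul_le_of_le_one_right (norm_nonneg _) hτ) hP
    · rw [norm_mul]
      exact lt_of_le_of_lt (mul_le_of_le_one_left (norm_nonneg _)
        (IsUltrametricDist.norm_intCast_le_one K _)) (h i)

theorem sml_root {K R : Type*} [NormedField K] [IsUltrametricDist K] [CommRing R] (ψ : R →+* K)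
    (hψ : ∀ r, ‖ψ r‖ ≤ 1) (Q : Polynomial R) (hQ : ‖ψ Q.leadingCoeff‖ = 1) (x : K)
    (hx : Q.eval₂ ψ x = 0) : ‖x‖ ≤ 1 := by
  by_contra! hlt
  rw [Polynomial.eval₂_eq_sum_range] at hx
  rw [Finset.sum_range_succ] at hx
  change _ + ψ Q.leadingCoeff * _ = 0 at hx
  have h1 : ‖x‖ ^ Q.natDegree = ‖∑ i ∈ Finset.range Q.natDegree, ψ (Q.coeff i) * x ^ i‖ := by
    rw [eq_neg_of_add_eq_zero_left hx, norm_neg, norm_mul, hQ, one_mul, norm_pow]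
  rcases hd : Q.natDegree with _ | k
  · rw [hd] at h1; simp at h1
  · rw [hd] at h1
    have : ‖∑ i ∈ Finset.range (k + 1), ψ (Q.coeff i) * x ^ i‖ ≤ ‖x‖ ^ k := by
      apply IsUltrametricDist.norm_sum_le_of_forall_le_of_nonneg (by positivity)
      intro i hi
      rw [norm_mul, norm_pow]
      refine (mul_le_of_le_one_left (by positivity) (hψ _)).trans ?_
      exact pow_le_pow_right₀ hlt.le (by simpa [Nat.lt_succ_iff] using hi)
    rw [← h1] at this
    have h2 : ‖x‖ ^ k < ‖x‖ ^ (k+1) := pow_lt_pow_right₀ hlt (Nat.lt_succ_self k)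
    linarith

theorem sml_indep (p : ℕ) [Fact p.Prime] {ι : Type} (x : ι → ℂ)
    (hx : AlgebraicIndependent ℤ x) (c : ι → ℤ) : ∃ τ : ι → PadicAlgCl p,
    AlgebraicIndependent ℤ τ ∧ ∀ i, ‖τ i - c i‖ < 1 := by
  obtain ⟨κ, s, hs⟩ := exists_isTranscendenceBasis' ℚ (PadicAlgCl p)
  have hc : Cardinal.continuum ≤ Cardinal.mk (PadicAlgCl p) :=
    (continuum_le_cardinal_of_nontriviallyNormedField ℚ_[p]).trans
      (Cardinal.mk_le_of_injective (algebraMap ℚ_[p] (PadicAlgCl p)).injective)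
  have hk := IsAlgClosed.cardinal_eq_cardinal_transcendence_basis_of_aleph0_lt' s hs
    (by simp) (Cardinal.aleph0_lt_continuum.trans_le hc)
  have hle : Cardinal.mk ι ≤ Cardinal.mk κ := by
    rw [← hk]
    refine le_trans ?_ hc
    rw [← Cardinal.mk_complex]
    exact Cardinal.mk_le_of_injective hx.injective
  obtain ⟨e⟩ := Cardinal.le_def _ _ |>.1 hle
  have hs' := hs.1.comp e e.injective
  have hN : ∀ i, ∃ k : ℕ, ‖(p : PadicAlgCl p) ^ k * s (e i)‖ < 1 := by
    intro i
    have hp1 : ‖(p : PadicAlgCl p)‖ < 1 := by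
      have := PadicAlgCl.norm_extends p (p : ℚ_[p])
      rw [map_natCast] at this
      rw [this]; exact Padic.norm_p_lt_one
    have := (tendsto_pow_atTop_nhds_zero_of_lt_one (norm_nonneg _) hp1).mul_const ‖s (e i)‖
    rw [zero_mul] at this
    obtain ⟨k, hk⟩ := (this.eventually (gt_mem_nhds zero_lt_one)).exists
    exact ⟨k, by simpa using hk⟩
  choose k hk using hN
  refine ⟨_, (sml_affine hs' (fun i => (p : ℚ) ^ k i) (fun i => (c i : ℚ)) ?_).restrictScalars
    (algebraMap ℤ ℚ).injective_int, ?_⟩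
  · intro i
    have : p ≠ 0 := (Fact.out : p.Prime).ne_zero
    positivity
  · intro i
    simpa using hk i

theorem sml_embed (S : Finset ℂ) : ∃ (p : ℕ) (_ : Fact p.Prime) (φ : ℂ →+* PadicAlgCl p),
    ∀ a ∈ S, ‖φ a‖ ≤ 1 := by
  classical
  obtain ⟨ι, x, hx⟩ := exists_isTranscendenceBasis' ℤ ℂ
  have halg := hx.isAlgebraic
  set R := Algebra.adjoin ℤ (Set.range x) with hR
  have hQ : ∀ a : ℂ, ∃ Q : Polynomial R, Q ≠ 0 ∧ Polynomial.aeval a Q = 0 :=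
    fun a => halg.isAlgebraic a
  choose Q hQ0 hQr using hQ
  let e := hx.1.aevalEquiv
  let ℓ : MvPolynomial ι ℤ := ∏ a ∈ S, e.symm (Q a).leadingCoeff
  have hℓ : ℓ ≠ 0 := by
    refine Finset.prod_ne_zero_iff.2 fun a _ => ?_
    rw [Ne, EmbeddingLike.map_eq_zero_iff]
    exact Polynomial.leadingCoeff_ne_zero.2 (hQ0 a)
  obtain ⟨c, hc⟩ : ∃ c : ι → ℤ, MvPolynomial.eval c ℓ ≠ 0 := by
    by_contra! h
    exact hℓ (MvPolynomial.funext (by simpa using h))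
  obtain ⟨p, hple, hp⟩ := Nat.exists_infinite_primes ((MvPolynomial.eval c ℓ).natAbs + 1)
  haveI : Fact p.Prime := ⟨hp⟩
  obtain ⟨τ, hτ, hτc⟩ := sml_indep p x hx.1 c
  have hP := sml_congr τ c hτc
  have hP1 : ∀ P : MvPolynomial ι ℤ, ‖MvPolynomial.aeval τ P‖ ≤ 1 := by
    intro P
    have := IsUltrametricDist.norm_add_le_max (MvPolynomial.aeval τ P - ((MvPolynomial.eval c P : ℤ) : PadicAlgCl p)) ((MvPolynomial.eval c P : ℤ) : PadicAlgCl p)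
    rw [sub_add_cancel] at this
    exact this.trans (max_le (hP P).le (IsUltrametricDist.norm_intCast_le_one _ _))
  have hℓ1 : ‖MvPolynomial.aeval τ ℓ‖ = 1 := by
    have h1 : ‖((MvPolynomial.eval c ℓ : ℤ) : PadicAlgCl p)‖ = 1 := by
      have h2 := PadicAlgCl.norm_extends p ((MvPolynomial.eval c ℓ : ℤ) : ℚ_[p])
      rw [map_intCast] at h2
      rw [h2]
      refine le_antisymm (Padic.norm_int_le_one _) (not_lt.1 fun h => ?_)
      rw [Padic.norm_intCast_lt_one_iff] at h
      have h3 := Int.natAbs_dvd_natAbs.2 h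
      have h4 := Nat.le_of_dvd (Int.natAbs_pos.2 hc) h3
      simp at h4
      omega
    refine le_antisymm (hP1 _) ?_
    by_contra! h
    have := IsUltrametricDist.norm_add_le_max (MvPolynomial.aeval τ ℓ) (-(MvPolynomial.aeval τ ℓ - ((MvPolynomial.eval c ℓ : ℤ) : PadicAlgCl p)))
    rw [← sub_eq_add_neg, sub_sub_cancel, h1, norm_neg] at this
    exact absurd this (not_le.2 (max_lt h (hP ℓ)))
  let ψ : R →+* PadicAlgCl p := (MvPolynomial.aeval τ : MvPolynomial ι ℤ →ₐ[ℤ] _).toRingHom.comp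
    (e.symm : R →+* MvPolynomial ι ℤ)
  have hψ : Function.Injective ψ := fun u v huv => e.symm.injective (hτ huv)
  letI : Algebra R (PadicAlgCl p) := ψ.toAlgebra
  haveI : FaithfulSMul R (PadicAlgCl p) := (faithfulSMul_iff_algebraMap_injective _ _).2 hψ
  haveI : Module.IsTorsionFree R (PadicAlgCl p) := inferInstance
  let φ : ℂ →ₐ[R] PadicAlgCl p := IsAlgClosed.lift
  refine ⟨p, inferInstance, φ.toRingHom, fun a ha => ?_⟩
  refine sml_root ψ (fun r => hP1 _) (Q a) ?_ _ ?_
  · have h1 : ∏ a ∈ S, ‖ψ (Q a).leadingCoeff‖ = 1 := by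
      rw [← hℓ1, map_prod, norm_prod]; rfl
    refine le_antisymm (hP1 _) ?_
    rw [← h1, ← Finset.mul_prod_erase _ _ ha]
    exact mul_le_of_le_one_right (norm_nonneg _)
      (Finset.prod_le_one (fun _ _ => norm_nonneg _) (fun _ _ => hP1 _))
  · have h1 := congrArg φ (hQr a)
    rw [map_zero, ← Polynomial.aeval_algHom_apply] at h1
    exact h1

theorem sml_radius (p : ℕ) [Fact p.Prime] (F : Type*) [NontriviallyNormedField F]
    [NormedAlgebra ℚ_[p] F] : 0 < (NormedSpace.expSeries F F).radius := by
  have hp : 1 < p := (Fact.out : p.Prime).one_lt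
  have hp0 : (0 : ℝ) < p := by positivity
  have hfac : ∀ n : ℕ, ‖((n.factorial : F))⁻¹‖ ≤ (p : ℝ) ^ n := by
    intro n
    have h1 : ‖(n.factorial : F)‖ = ‖(n.factorial : ℚ_[p])‖ := by
      rw [← norm_algebraMap' F (n.factorial : ℚ_[p]), map_natCast]
    have h0 : (n.factorial : ℚ_[p]) ≠ 0 := by exact_mod_cast n.factorial_ne_zero
    rw [norm_inv, h1, Padic.norm_eq_zpow_neg_valuation h0, ← zpow_neg, neg_neg,
      Padic.valuation_natCast, zpow_natCast]
    refine pow_le_pow_right₀ (by exact_mod_cast hp.le) ?_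
    have h2 := sub_one_mul_padicValNat_factorial (p := p) n
    have h3 : padicValNat p n.factorial ≤ (p - 1) * padicValNat p n.factorial :=
      Nat.le_mul_of_pos_left _ (by omega)
    omega
  let r : NNReal := ⟨(p : ℝ)⁻¹, by positivity⟩
  have hr : (0 : ENNReal) < r := by
    rw [ENNReal.coe_pos]
    exact inv_pos.2 hp0
  refine hr.trans_le ((NormedSpace.expSeries F F).le_radius_of_bound 1 fun n => ?_)
  have h3 : ‖NormedSpace.expSeries F F n‖ ≤ (p : ℝ) ^ n := by
    rw [NormedSpace.expSeries]
    rw [norm_smul, ContinuousMultilinearMap.norm_mkPiAlgebraFin, mul_one]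
    exact hfac n
  calc _ ≤ (p : ℝ) ^ n * ((p : ℝ)⁻¹) ^ n := by
        gcongr; exact le_of_eq rfl
    _ = 1 := by rw [← mul_pow, mul_inv_cancel₀ hp0.ne', one_pow]

/-- `N` is a good modulus for `Z`. -/
def SmlGood (Z : Set ℤ) (N : ℤ) : Prop :=
  ∀ r : ℤ, (∀ n, n ≡ r [ZMOD N] → n ∈ Z) ∨ {n : ℤ | n ≡ r [ZMOD N] ∧ n ∈ Z}.Finite

theorem SmlGood.dvd {Z : Set ℤ} {N M : ℤ} (h : SmlGood Z N) (hd : N ∣ M) : SmlGood Z M := by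
  intro r
  rcases h r with h | h
  · exact Or.inl fun n hn => h n (hn.of_dvd hd)
  · exact Or.inr (h.subset fun n hn => ⟨hn.1.of_dvd hd, hn.2⟩)

theorem sml_local (p : ℕ) [Fact p.Prime] (F : Type*) [NontriviallyNormedField F]
    [NormedAlgebra ℚ_[p] F] [IsUltrametricDist F] [ProperSpace F]
    (G : F → F) (hG : ∀ z : F, ‖z‖ ≤ 1 → AnalyticAt F G z) :
    ∃ N : ℤ, 0 < N ∧ SmlGood {n : ℤ | G n = 0} N := by
  haveI : CharZero F := (RingHom.charZero_iff (algebraMap ℚ_[p] F).injective).mp inferInstance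
  have hU : ∀ z : Metric.closedBall (0 : F) 1, ∃ U : Set F, IsOpen U ∧ z.1 ∈ U ∧
      ((∀ y ∈ U, G y = 0) ∨ (∀ y ∈ U, y ≠ z → G y ≠ 0)) := by
    intro z
    have hz : ‖z.1‖ ≤ 1 := mem_closedBall_zero_iff.1 z.2
    rcases (hG z hz).eventually_eq_zero_or_eventually_ne_zero with h | h
    · obtain ⟨U, hU, hUo, hzU⟩ := eventually_nhds_iff.1 h
      exact ⟨U, hUo, hzU, Or.inl hU⟩
    · rw [eventually_nhdsWithin_iff] at h
      obtain ⟨U, hU, hUo, hzU⟩ := eventually_nhds_iff.1 h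
      exact ⟨U, hUo, hzU, Or.inr hU⟩
  choose U hUo hzU hU using hU
  obtain ⟨δ, hδ, hL⟩ := lebesgue_number_lemma_of_metric (isCompact_closedBall (0 : F) 1) hUo
    (fun z hz => mem_iUnion.2 ⟨⟨z, hz⟩, hzU ⟨z, hz⟩⟩)
  have hp1 : ‖(p : F)‖ < 1 := by
    rw [← map_natCast (algebraMap ℚ_[p] F), norm_algebraMap']; exact Padic.norm_p_lt_one
  obtain ⟨k, hk⟩ := exists_pow_lt_of_lt_one hδ hp1
  refine ⟨(p : ℤ) ^ k, by have := (Fact.out : p.Prime).pos; positivity, fun r => ?_⟩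
  obtain ⟨z, hz⟩ := hL (r : F) (by simpa using IsUltrametricDist.norm_intCast_le_one F r)
  have hmem : ∀ n : ℤ, n ≡ r [ZMOD (p : ℤ) ^ k] → (n : F) ∈ U z := by
    intro n hn
    apply hz
    rw [mem_ball_iff_norm]
    obtain ⟨m, hm⟩ := hn.symm.dvd
    have : (n : F) - r = (p : F) ^ k * m := by exact_mod_cast congrArg (Int.cast : ℤ → F) hm
    rw [this, norm_mul, norm_pow]
    exact lt_of_le_of_lt (mul_le_of_le_one_right (by positivity)
      (IsUltrametricDist.norm_intCast_le_one F m)) hk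
  rcases hU z with h | h
  · exact Or.inl fun n hn => h _ (hmem n hn)
  · refine Or.inr (Set.Subsingleton.finite ?_)
    rintro a ⟨ha, ha0⟩ b ⟨hb, hb0⟩
    have h1 : (a : F) = z := by
      by_contra hne; exact h _ (hmem a ha) hne ha0
    have h2 : (b : F) = z := by
      by_contra hne; exact h _ (hmem b hb) hne hb0
    exact_mod_cast h1.trans h2.symm

theorem sml_pow {F : Type*} [NontriviallyNormedField F] [ProperSpace F]
    {ι : Type*} [Finite ι] (a : ι → F) (ha : ∀ i, ‖a i‖ = 1) (V : Set F) (hV : V ∈ nhds (1 : F)) :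
    ∃ N : ℕ, 0 < N ∧ ∀ i, a i ^ N ∈ V := by
  cases nonempty_fintype ι
  obtain ⟨ε, hε, hεV⟩ := Metric.mem_nhds_iff.1 hV
  have hc : IsCompact (Metric.closedBall (0 : ι → F) 1) := isCompact_closedBall _ _
  obtain ⟨y, -, g, hg, hlim⟩ := hc.tendsto_subseq (x := fun n : ℕ => a ^ n) (by
    intro n
    rw [mem_closedBall_zero_iff, pi_norm_le_iff_of_nonneg zero_le_one]
    intro i; simp [ha])
  obtain ⟨n0, hn⟩ := Metric.cauchySeq_iff.1 hlim.cauchySeq ε hε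
  have hlt : g n0 < g (n0 + 1) := hg (Nat.lt_succ_self _)
  refine ⟨g (n0 + 1) - g n0, by omega, fun i => hεV ?_⟩
  have h1 := hn (n0 + 1) (by omega) n0 le_rfl
  have h2 := (dist_le_pi_dist _ _ i).trans_lt h1
  rw [mem_ball_iff_norm]
  rw [dist_eq_norm] at h2
  have h3 : (a ^ g (n0 + 1)) i - (a ^ g n0) i = a i ^ g n0 * (a i ^ (g (n0+1) - g n0) - 1) := by
    simp only [Pi.pow_apply]
    rw [mul_sub, ← pow_add, mul_one, Nat.add_sub_cancel' hlt.le]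
  have h4 : ‖a i ^ g n0 * (a i ^ (g (n0+1) - g n0) - 1)‖ < ε := by rw [← h3]; exact h2
  rwa [norm_mul, norm_pow, ha, one_pow, one_mul] at h4

theorem sml_padic (p : ℕ) [Fact p.Prime] (F : Type*) [NontriviallyNormedField F]
    [NormedAlgebra ℚ_[p] F] [IsUltrametricDist F] [ProperSpace F]
    {ι : Type*} [Fintype ι] (c a : ι → F) (ha : ∀ i, ‖a i‖ = 1) :
    ∃ N : ℤ, 0 < N ∧ SmlGood {n : ℤ | ∑ i, c i * a i ^ n = 0} N := by
  haveI : CharZero F := (RingHom.charZero_iff (algebraMap ℚ_[p] F).injective).mp inferInstance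
  haveI : CompleteSpace F := inferInstance
  have hrad := sml_radius p F
  have hmap := (hasStrictDerivAt_exp_zero_of_radius_pos hrad).map_nhds_eq one_ne_zero
  rw [NormedSpace.exp_zero] at hmap
  set B := Metric.eball (0 : F) (NormedSpace.expSeries F F).radius with hB
  have hBn : B ∈ nhds (0 : F) := Metric.eball_mem_nhds _ hrad
  have hV : NormedSpace.exp '' B ∈ nhds (1 : F) := by
    rw [← hmap]; exact Filter.image_mem_map hBn
  obtain ⟨N, hN, hNa⟩ := sml_pow a ha _ hV
  choose b hb hba using hNa
  have hBs : ∀ x ∈ B, ∀ z : F, ‖z‖ ≤ 1 → z * x ∈ B := by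
    intro x hx z hz
    rw [hB, mem_eball_zero_iff] at hx ⊢
    refine lt_of_le_of_lt ?_ hx
    rw [← ofReal_norm, ← ofReal_norm]
    apply ENNReal.ofReal_le_ofReal
    rw [norm_mul]
    exact mul_le_of_le_one_left (norm_nonneg _) hz
  have hnat : ∀ x ∈ B, ∀ n : ℕ, NormedSpace.exp ((n : F) * x) = NormedSpace.exp x ^ n := by
    intro x hx n
    induction n with
    | zero => simp [NormedSpace.exp_zero]
    | succ n ih =>
      rw [pow_succ, ← ih, ← NormedSpace.exp_add_of_mem_ball (𝕂 := F) (hBs x hx n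
        (by exact_mod_cast IsUltrametricDist.norm_intCast_le_one F n)) hx]
      congr 1; push_cast; ring
  have hint : ∀ x ∈ B, ∀ n : ℤ, NormedSpace.exp ((n : F) * x) = NormedSpace.exp x ^ n := by
    intro x hx n
    obtain ⟨m, rfl | rfl⟩ := n.eq_nat_or_neg
    · simpa using hnat x hx m
    · have := hBs x hx m (by exact_mod_cast IsUltrametricDist.norm_intCast_le_one F m)
      have h1 := NormedSpace.exp_neg_of_mem_ball (𝕂 := F) this
      rw [hnat x hx] at h1
      simpa using h1
  -- each residue class
  have hcls : ∀ m : ℤ, ∃ M : ℤ, 0 < M ∧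
      SmlGood {n : ℤ | ∑ i, c i * a i ^ (m + N * n) = 0} M := by
    intro m
    obtain ⟨M, hM, hg⟩ := sml_local p F
      (fun z => ∑ i, c i * a i ^ m * NormedSpace.exp (z * b i)) (by
        intro z hz
        refine Finset.analyticAt_fun_sum _ fun i _ => ?_
        refine analyticAt_const.mul ?_
        exact (NormedSpace.analyticAt_exp_of_mem_ball (𝕂 := F) _ (hBs _ (hb i) z hz)).comp_of_eq
          (analyticAt_id.mul analyticAt_const) rfl)
    refine ⟨M, hM, ?_⟩
    refine (congrArg (fun Z => SmlGood Z M) (Set.ext fun n => ?_)).mpr hg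
    refine Eq.to_iff (congrArg (fun x => x = 0) (Finset.sum_congr rfl fun i _ => ?_))
    have hai : a i ≠ 0 := by
      intro h; have := ha i; rw [h] at this; simp at this
    rw [hint _ (hb i), hba, zpow_add₀ hai, zpow_mul, zpow_natCast, mul_assoc]
  choose M hM hg using hcls
  have hN' : (0 : ℤ) < N := by exact_mod_cast hN
  let Mt : ℤ := ∏ m ∈ Finset.range N, M m
  have hMt : 0 < Mt := Finset.prod_pos fun _ _ => hM _
  refine ⟨N * Mt, by positivity, fun r => ?_⟩
  have hr0 := Int.emod_nonneg r hN'.ne'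
  have hr1 := Int.emod_lt_of_pos r hN'
  have hgood : SmlGood {n : ℤ | ∑ i, c i * a i ^ (r % N + N * n) = 0} Mt := by
    refine (hg (r % N)).dvd ?_
    have := Finset.dvd_prod_of_mem (fun m : ℕ => M m) (Finset.mem_range.2
      (show (r % N).toNat < N by omega))
    simpa [Int.toNat_of_nonneg hr0] using this
  have hdec : ∀ n, n ≡ r [ZMOD N * Mt] → ∃ q, n = r % N + N * q ∧ q ≡ r / N [ZMOD Mt] := by
    intro n hn
    obtain ⟨t, ht⟩ := hn.symm.dvd
    refine ⟨r / N + Mt * t, ?_, ?_⟩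
    · have := Int.emod_add_mul_ediv r N
      linear_combination ht - this
    · exact (Int.modEq_iff_dvd.2 ⟨-t, by ring⟩)
  rcases hgood (r / N) with h | h
  · left
    intro n hn
    obtain ⟨q, rfl, hq⟩ := hdec n hn
    exact h q hq
  · right
    refine (h.image (fun q => r % N + N * q)).subset ?_
    rintro n ⟨hn, hz⟩
    obtain ⟨q, rfl, hq⟩ := hdec n hn
    exact ⟨q, ⟨hq, hz⟩, rfl⟩

theorem sml_good {ι : Type} [Fintype ι] (c a : ι → ℂ) (ha : ∀ i, a i ≠ 0) :
    ∃ N : ℤ, 0 < N ∧ SmlGood {n : ℤ | ∑ i, c i * a i ^ n = 0} N := by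
  classical
  obtain ⟨p, hp, φ, hφ⟩ := sml_embed (Finset.univ.image a ∪ Finset.univ.image (fun i => (a i)⁻¹))
  have hnorm : ∀ i, ‖φ (a i)‖ = 1 := by
    intro i
    have h1 := hφ (a i) (by simp)
    have h2 := hφ (a i)⁻¹ (by simp)
    have h0 : 0 < ‖φ (a i)‖ := norm_pos_iff.2 ((map_ne_zero φ).2 (ha i))
    rw [map_inv₀, norm_inv] at h2
    exact le_antisymm h1 ((inv_le_one₀ h0).1 h2)
  let S : Set (PadicAlgCl p) := Set.range (fun i => φ (a i)) ∪ Set.range (fun i => φ (c i))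
  have hS : S.Finite := (Set.finite_range _).union (Set.finite_range _)
  let F := IntermediateField.adjoin ℚ_[p] S
  have hfd : FiniteDimensional ℚ_[p] F :=
    IntermediateField.finiteDimensional_adjoin (fun x _ => Algebra.IsIntegral.isIntegral x)
  have hprop : ProperSpace F := FiniteDimensional.proper ℚ_[p] F
  let a' : ι → F := fun i => ⟨φ (a i), IntermediateField.subset_adjoin _ _ (Or.inl ⟨i, rfl⟩)⟩
  let c' : ι → F := fun i => ⟨φ (c i), IntermediateField.subset_adjoin _ _ (Or.inr ⟨i, rfl⟩)⟩
  obtain ⟨N, hN, h⟩ := sml_padic p F c' a' hnorm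
  refine ⟨N, hN, ?_⟩
  refine (congrArg (fun Z => SmlGood Z N) (Set.ext fun n => ?_)).mpr h
  have h1 : ((∑ i, c' i * a' i ^ n : F) : PadicAlgCl p) = φ (∑ i, c i * a i ^ n) := by
    change F.val (∑ i, c' i * a' i ^ n : F) = _
    simp only [map_sum, map_mul, map_zpow₀]
    rfl
  simp only [Set.mem_setOf_eq]
  rw [← map_eq_zero φ, ← h1, ZeroMemClass.coe_eq_zero]

/-- **Skolem–Mahler–Lech theorem for exponential polynomials.** -/
theorem skolem_mahler_lech (f : ℂ → ℂ) (hf : IsExpPoly f)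
    (hinf : {n : ℤ | f (n : ℂ) = 0}.Infinite) :
    ∃ Δ : ℤ, 0 < Δ ∧ ∃ D : Finset ℤ, D.Nonempty ∧ (∀ d ∈ D, 0 ≤ d ∧ d < Δ) ∧
      (∀ n : ℤ, (∃ d ∈ D, n ≡ d [ZMOD Δ]) → f (n : ℂ) = 0) ∧
      {n : ℤ | f (n : ℂ) = 0 ∧ ∀ d ∈ D, ¬ n ≡ d [ZMOD Δ]}.Finite := by
  obtain ⟨k, lam, mu, hf⟩ := hf
  have hfn : ∀ n : ℤ, f n = ∑ i, lam i * Complex.exp (mu i) ^ n := by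
    intro n
    rw [hf]
    refine Finset.sum_congr rfl fun i _ => ?_
    rw [mul_comm (mu i), Complex.exp_int_mul]
  obtain ⟨N, hN, hgood⟩ := sml_good lam (fun i => Complex.exp (mu i))
    (fun i => Complex.exp_ne_zero _)
  have hset : {n : ℤ | ∑ i, lam i * Complex.exp (mu i) ^ n = 0} = {n : ℤ | f n = 0} := by
    ext n; simp only [Set.mem_setOf_eq, hfn]
  rw [hset] at hgood
  classical
  let D : Finset ℤ := (Finset.Ico 0 N).filter (fun d => ∀ n : ℤ, n ≡ d [ZMOD N] → f n = 0)
  have hfin : {n : ℤ | f (n : ℂ) = 0 ∧ ∀ d ∈ D, ¬ n ≡ d [ZMOD N]}.Finite := by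
    refine (Set.Finite.biUnion (((Finset.Ico 0 N).filter
      (fun d => ¬ ∀ n : ℤ, n ≡ d [ZMOD N] → f n = 0)).finite_toSet)
      (t := fun d => {n : ℤ | n ≡ d [ZMOD N] ∧ n ∈ {n : ℤ | f n = 0}}) ?_).subset ?_
    · intro d hd
      simp only [Finset.coe_filter, Set.mem_setOf_eq] at hd
      exact (hgood d).resolve_left hd.2
    · rintro n ⟨hn0, hn⟩
      have hI : n % N ∈ Finset.Ico 0 N :=
        Finset.mem_Ico.2 ⟨Int.emod_nonneg _ hN.ne', Int.emod_lt_of_pos _ hN⟩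
      have hc : n ≡ n % N [ZMOD N] := (Int.mod_modEq n N).symm
      simp only [Set.mem_iUnion]
      refine ⟨n % N, ?_, hc, hn0⟩
      rw [Finset.mem_coe, Finset.mem_filter]
      refine ⟨hI, fun h => hn (n % N) ?_ hc⟩
      exact Finset.mem_filter.2 ⟨hI, h⟩
  refine ⟨N, hN, D, ?_, ?_, ?_, hfin⟩
  · by_contra hD
    rw [Finset.not_nonempty_iff_eq_empty] at hD
    refine hinf (hfin.subset fun n hn => ⟨hn, fun d hd => ?_⟩)
    rw [hD] at hd
    simp at hd
  · intro d hd
    exact Finset.mem_Ico.1 (Finset.mem_filter.1 hd).1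
  · rintro n ⟨d, hd, hnd⟩
    exact (Finset.mem_filter.1 hd).2 n hnd
end
end

section
/- A function f ∈ 𝓔 is a unit of the ring 𝓔 (i.e. has a multiplicative inverse in 𝓔) if and only if there exist c, α ∈ ℂ with c ≠ 0 such that f(z) = c·e^{αz} for all z ∈ ℂ. -/
open Complex Set

noncomputable section

def expCharHom (a : ℂ) : Multiplicative ℂ →* ℂ where
  toFun z := Complex.exp (a * z.toAdd)
  map_one' := by simp
  map_mul' x y := by simp [mul_add, Complex.exp_add]

theorem expCharHom_injective : Function.Injective expCharHom := by
  intro a b h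
  have h1 : (fun z : ℂ => Complex.exp (a * z)) = fun z => Complex.exp (b * z) := by
    funext z
    exact DFunLike.congr_fun h (Multiplicative.ofAdd z)
  have hd : ∀ c : ℂ, deriv (fun z : ℂ => Complex.exp (c * z)) 0 = c := by
    intro c
    have := ((hasDerivAt_id (0 : ℂ)).const_mul c).cexp.deriv
    simpa using this
  rw [← hd a, h1, hd b]

theorem expLinIndep :
    LinearIndependent ℂ (fun (a : ℂ) (z : ℂ) => Complex.exp (a * z)) :=
  (linearIndependent_monoidHom (Multiplicative ℂ) ℂ).comp expCharHom expCharHom_injective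

def expHom : Multiplicative ℂ →* (ℂ → ℂ) where
  toFun a := fun z => Complex.exp (a.toAdd * z)
  map_one' := by funext z; simp
  map_mul' x y := by funext z; simp [add_mul, Complex.exp_add]

def expLift : AddMonoidAlgebra ℂ ℂ →ₐ[ℂ] (ℂ → ℂ) := AddMonoidAlgebra.lift ℂ (ℂ → ℂ) ℂ expHom

theorem expLift_single (a c : ℂ) :
    expLift (AddMonoidAlgebra.single a c) = fun z => c * Complex.exp (a * z) := by
  unfold expLift
  rw [AddMonoidAlgebra.lift_single]
  rfl

theorem expLift_injective : Function.Injective expLift := by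
  intro x y h
  apply AddMonoidAlgebra.coeff_injective
  apply expLinIndep
  unfold expLift at h
  rw [AddMonoidAlgebra.lift_apply, AddMonoidAlgebra.lift_apply] at h
  exact h

theorem IsExpPoly.exists_lift {f : ℂ → ℂ} (hf : IsExpPoly f) : ∃ x, expLift x = f := by
  obtain ⟨N, lam, mu, h⟩ := hf
  refine ⟨∑ i, AddMonoidAlgebra.single (mu i) (lam i), ?_⟩
  funext z
  rw [map_sum, Finset.sum_apply, h z]
  simp only [expLift_single]

theorem unit_single {x y : AddMonoidAlgebra ℂ ℂ} (h : x * y = 1) :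
    ∃ c a : ℂ, c ≠ 0 ∧ x = AddMonoidAlgebra.single a c := by
  have hx : x ≠ 0 := by rintro rfl; simp at h
  have hy : y ≠ 0 := by rintro rfl; simp at h
  have hx' : 0 < x.coeff.support.card := by
    simpa [Finset.card_pos, Finsupp.support_nonempty_iff] using hx
  have hy' : 0 < y.coeff.support.card := by
    simpa [Finset.card_pos, Finsupp.support_nonempty_iff] using hy
  have key : ∀ p ∈ x.coeff.support ×ˢ y.coeff.support,
      UniqueAdd x.coeff.support y.coeff.support p.1 p.2 → p.1 + p.2 = 0 := by
    intro p hp hu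
    rw [Finset.mem_product, Finsupp.mem_support_iff, Finsupp.mem_support_iff] at hp
    have h2 := AddMonoidAlgebra.coeff_mul_add_of_uniqueAdd hu
    by_contra hne
    rw [h, AddMonoidAlgebra.one_def, AddMonoidAlgebra.coeff_single,
      Finsupp.single_eq_of_ne hne] at h2
    exact mul_ne_zero hp.1 hp.2 h2.symm
  have hcard : x.coeff.support.card * y.coeff.support.card ≤ 1 := by
    by_contra hlt
    obtain ⟨p, hp, q, hq, hne, up, uq⟩ :=
      TwoUniqueSums.uniqueAdd_of_one_lt_card (not_le.mp hlt)
    have e := (key q hq uq).trans (key p hp up).symm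
    have hq' := Finset.mem_product.mp hq
    have := up hq'.1 hq'.2 e
    exact hne (Prod.ext this.1.symm this.2.symm)
  have h1 : x.coeff.support.card = 1 := by nlinarith
  obtain ⟨a, c, hc, e⟩ := Finsupp.card_support_eq_one'.mp h1
  exact ⟨c, a, hc, AddMonoidAlgebra.coeff_injective (by rw [e, AddMonoidAlgebra.coeff_single])⟩

/-- The units of `𝓔` are exactly the functions `z ↦ c·e^{αz}` with `c ≠ 0`. -/
theorem unit_iff_exp (f : ℂ → ℂ) (hf : IsExpPoly f) :
    (∃ g : ℂ → ℂ, IsExpPoly g ∧ f * g = 1) ↔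
      ∃ c α : ℂ, c ≠ 0 ∧ ∀ z : ℂ, f z = c * Complex.exp (α * z) := by
  constructor
  · rintro ⟨g, hg, hfg⟩
    obtain ⟨x, rfl⟩ := hf.exists_lift
    obtain ⟨y, rfl⟩ := hg.exists_lift
    have hxy : x * y = 1 := expLift_injective (by rw [map_mul, hfg, map_one])
    obtain ⟨c, a, hc, rfl⟩ := unit_single hxy
    exact ⟨c, a, hc, fun z => by rw [expLift_single]⟩
  · rintro ⟨c, α, hc, h⟩
    refine ⟨fun z => c⁻¹ * Complex.exp (-α * z), ⟨1, fun _ => c⁻¹, fun _ => -α, by simp⟩, ?_⟩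
    funext z
    rw [Pi.mul_apply, h z, mul_mul_mul_comm, mul_inv_cancel₀ hc, ← Complex.exp_add]
    simp
end
end

section
/- Let f and g be nonzero exponential polynomials in 𝓔. If g divides f in the ring 𝓔, then there exist units a and b of 𝓔 such that supp(a·g) is contained in supp(b·f), i.e. every element of supp(a·g) is a ℚ-linear combination of elements of supp(b·f). -/
open Complex Set

noncomputable section

lemma aux_max (G Q : AddMonoidAlgebra ℂ ℂ) (hG : G ≠ 0) (hQ : Q ≠ 0) (φ : ℂ →ₗ[ℚ] ℚ)
    (hφ : ∀ x ∈ (G * Q).coeff.support, φ x = 0) :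
    ∀ x ∈ G.coeff.support, ∀ y ∈ Q.coeff.support, φ x + φ y ≤ 0 := by
  classical
  have hGs : G.coeff.support.Nonempty := by
    rw [Finsupp.support_nonempty_iff]; simpa using hG
  have hQs : Q.coeff.support.Nonempty := by
    rw [Finsupp.support_nonempty_iff]; simpa using hQ
  obtain ⟨m, hm, hmax⟩ := G.coeff.support.exists_max_image φ hGs
  obtain ⟨n, hn, hnax⟩ := Q.coeff.support.exists_max_image φ hQs
  obtain ⟨a, ha, b, hb, hu⟩ := UniqueSums.uniqueAdd_of_nonempty
    (A := G.coeff.support.filter (fun x => φ x = φ m))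
    (B := Q.coeff.support.filter (fun x => φ x = φ n))
    ⟨m, by simp [Finsupp.mem_support_iff.1 hm]⟩ ⟨n, by simp [Finsupp.mem_support_iff.1 hn]⟩
  rw [Finset.mem_filter] at ha hb
  have hU : UniqueAdd G.coeff.support Q.coeff.support a b := by
    intro x y hx hy hxy
    have h1 := hmax x hx
    have h2 := hnax y hy
    have h3 : φ x + φ y = φ a + φ b := by rw [← map_add, ← map_add, hxy]
    refine hu ?_ ?_ hxy <;> rw [Finset.mem_filter]
    · exact ⟨hx, by linarith⟩
    · exact ⟨hy, by linarith⟩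
  have hc := AddMonoidAlgebra.coeff_mul_add_of_uniqueAdd hU
  have h0 : φ (a + b) = 0 := hφ _ (by
    rw [Finsupp.mem_support_iff, hc]
    exact mul_ne_zero (Finsupp.mem_support_iff.1 ha.1) (Finsupp.mem_support_iff.1 hb.1))
  rw [map_add] at h0
  intro x hx y hy
  have := hmax x hx
  have := hnax y hy
  linarith

lemma aux_core (G Q : AddMonoidAlgebra ℂ ℂ) (hG : G ≠ 0) (hQ : Q ≠ 0) (x y : ℂ)
    (hx : x ∈ G.coeff.support) (hy : y ∈ G.coeff.support) :
    x - y ∈ Submodule.span ℚ ((G * Q).coeff.support : Set ℂ) := by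
  by_contra h
  obtain ⟨φ, h1, h2⟩ := Submodule.exists_le_ker_of_notMem h
  have hz : ∀ x ∈ (G * Q).coeff.support, φ x = 0 := fun x hx =>
    h2 (Submodule.subset_span hx)
  obtain ⟨b, hb⟩ : Q.coeff.support.Nonempty := by
    rw [Finsupp.support_nonempty_iff]; simpa using hQ
  have hp := aux_max G Q hG hQ φ hz
  have hn := aux_max G Q hG hQ (-φ) (by simpa using hz)
  have e1 := hp x hx b hb
  have e2 := hp y hy b hb
  have e3 := hn x hx b hb
  have e4 := hn y hy b hb
  simp only [LinearMap.neg_apply] at e3 e4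
  apply h1
  rw [map_sub]
  linarith

def ev : AddMonoidAlgebra ℂ ℂ →ₐ[ℂ] (ℂ → ℂ) :=
  AddMonoidAlgebra.lift ℂ (ℂ → ℂ) ℂ
    { toFun := fun m z => Complex.exp (m.toAdd * z)
      map_one' := by ext z; simp
      map_mul' := by intro a b; ext z; simp [add_mul, Complex.exp_add] }

lemma ev_single (m c : ℂ) (z : ℂ) :
    ev (AddMonoidAlgebra.single m c) z = c * Complex.exp (m * z) := by
  simp [ev, AddMonoidAlgebra.lift_single]

lemma ev_canon (F : AddMonoidAlgebra ℂ ℂ) : ∃ (N : ℕ) (lam mu : Fin N → ℂ),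
    IsCanonicalRep (ev F) lam mu ∧ Set.range mu = (F.coeff.support : Set ℂ) := by
  let e := F.coeff.support.equivFin
  refine ⟨F.coeff.support.card, fun i => F.coeff (e.symm i), fun i => (e.symm i : ℂ),
    ⟨fun i => Finsupp.mem_support_iff.1 (e.symm i).2,
      Subtype.val_injective.comp e.symm.injective, fun z => ?_⟩, ?_⟩
  · rw [e.symm.sum_comp (fun x => F.coeff x * Complex.exp ((x : ℂ) * z)),
      Finset.sum_coe_sort F.coeff.support (fun x => F.coeff x * Complex.exp ((x : ℂ) * z))]
    simp [ev, AddMonoidAlgebra.lift_apply, Finsupp.sum, Finset.sum_apply]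
  · ext x
    constructor
    · rintro ⟨i, rfl⟩
      exact (e.symm i).2
    · intro hx
      exact ⟨e ⟨x, hx⟩, by simp⟩

lemma isExpPoly_ev (F : AddMonoidAlgebra ℂ ℂ) : IsExpPoly (ev F) := by
  obtain ⟨N, l, m, h, -⟩ := ev_canon F
  exact ⟨N, l, m, h.2.2⟩

lemma exists_ev {f : ℂ → ℂ} (hf : IsExpPoly f) : ∃ F, f = ev F := by
  obtain ⟨N, l, m, h⟩ := hf
  refine ⟨∑ i, AddMonoidAlgebra.single (m i) (l i), ?_⟩
  ext z
  rw [h, map_sum, Finset.sum_apply]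
  simp only [ev_single]

/-- If `g` divides `f` in `𝓔` (both nonzero), then for some units `a, b` of `𝓔` the support
of `a·g` is contained in the support of `b·f`. -/
theorem supp_le_of_dvd (f g : ℂ → ℂ) (hf : IsExpPoly f) (hg : IsExpPoly g)
    (hf0 : f ≠ 0) (hg0 : g ≠ 0) (hdvd : EDvd g f) :
    ∃ a b : ℂ → ℂ, EUnit a ∧ EUnit b ∧
      ∃ (M N : ℕ) (l : Fin M → ℂ) (em : Fin M → ℂ) (lam : Fin N → ℂ) (mu : Fin N → ℂ),
        IsCanonicalRep (a * g) l em ∧ IsCanonicalRep (b * f) lam mu ∧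
        Submodule.span ℚ (Set.range em) ≤ Submodule.span ℚ (Set.range mu) := by
  obtain ⟨q, hq, rfl⟩ := hdvd
  obtain ⟨G, rfl⟩ := exists_ev hg
  obtain ⟨Q, rfl⟩ := exists_ev hq
  have hG : G ≠ 0 := by rintro rfl; simp at hg0
  have hQ : Q ≠ 0 := by rintro rfl; simp at hf0
  obtain ⟨m, hm⟩ : G.coeff.support.Nonempty := by
    rw [Finsupp.support_nonempty_iff]; simpa using hG
  obtain ⟨M, l, em, h1, h2⟩ := ev_canon (AddMonoidAlgebra.single (-m) 1 * G)
  obtain ⟨N, lam, mu, h3, h4⟩ := ev_canon (G * Q)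
  refine ⟨ev (AddMonoidAlgebra.single (-m) 1), 1, ⟨isExpPoly_ev _, _,
    isExpPoly_ev (AddMonoidAlgebra.single m 1), ?_⟩,
    ⟨?_, 1, ?_, one_mul _⟩, M, N, l, em, lam, mu, ?_, ?_, ?_⟩
  · rw [← map_mul, AddMonoidAlgebra.single_mul_single]
    simp [← AddMonoidAlgebra.one_def]
  · rw [← map_one ev]; exact isExpPoly_ev _
  · rw [← map_one ev]; exact isExpPoly_ev _
  · rwa [← map_mul]
  · rwa [one_mul, ← map_mul]
  · rw [h2, h4, Submodule.span_le]
    intro x hx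
    have hx' : x + m ∈ G.coeff.support := by
      rw [Finset.mem_coe, Finsupp.mem_support_iff] at hx
      rw [Finsupp.mem_support_iff]
      intro h0
      apply hx
      rw [AddMonoidAlgebra.coeff_single_mul_eq_mul_coeff (x + m), h0, mul_zero]
      intro d _
      constructor
      · rintro rfl; ring
      · rintro rfl; ring
    simpa using aux_core G Q hG hQ _ _ hx' hm
end
end

section
/- Let f ∈ 𝓔 be a simple exponential polynomial. Then there exist a unit u of 𝓔, a nonzero μ ∈ ℂ, a natural number n, and nonzero complex numbers α₁,…,α_n such that f(z) = u(z)·∏_{i=1}^{n} (1 − α_i e^{μz}) for all z ∈ ℂ. -/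
open Complex Set

noncomputable section

theorem poly_mult_aux (s : Multiset ℂ) : ∃ (c : ℂ) (k n : ℕ) (α : Fin n → ℂ), c ≠ 0 ∧
    (∀ i, α i ≠ 0) ∧ ∀ x : ℂ, (s.map (fun r => x - r)).prod = c * x ^ k * ∏ i, (1 - α i * x) := by
  induction s using Multiset.induction_on with
  | empty => exact ⟨1, 0, 0, Fin.elim0, one_ne_zero, fun i => i.elim0, by simp⟩
  | cons r s ih =>
    obtain ⟨c, k, n, α, hc, hα, h⟩ := ih
    by_cases hr : r = 0
    · refine ⟨c, k + 1, n, α, hc, hα, fun x => ?_⟩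
      rw [Multiset.map_cons, Multiset.prod_cons, h, hr]; ring
    · refine ⟨c * (-r), k, n + 1, Fin.cons r⁻¹ α, by simp [hc, hr], ?_, fun x => ?_⟩
      · intro i
        refine Fin.cases ?_ (fun j => ?_) i
        · simpa using hr
        · simpa using hα j
      · rw [Multiset.map_cons, Multiset.prod_cons, h, Fin.prod_univ_succ]
        simp only [Fin.cons_zero, Fin.cons_succ]
        field_simp
        ring

theorem poly_fact_aux (P : Polynomial ℂ) (hP : P ≠ 0) :
    ∃ (c : ℂ) (k n : ℕ) (α : Fin n → ℂ), c ≠ 0 ∧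
    (∀ i, α i ≠ 0) ∧ ∀ x : ℂ, P.eval x = c * x ^ k * ∏ i, (1 - α i * x) := by
  obtain ⟨c, k, n, α, hc, hα, h⟩ := poly_mult_aux P.roots
  refine ⟨P.leadingCoeff * c, k, n, α, by simp [hc, hP], hα, fun x => ?_⟩
  have h1 := (IsAlgClosed.splits P).eq_prod_roots
  have h2 : P.eval x = P.leadingCoeff * (P.roots.map (fun r => x - r)).prod := by
    conv_lhs => rw [h1]
    rw [Polynomial.eval_mul, Polynomial.eval_C, Polynomial.eval_multiset_prod, Multiset.map_map]
    simp
  rw [h2, h]; ring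

theorem unit_aux (c a : ℂ) (hc : c ≠ 0) : EUnit (fun z => c * Complex.exp (a * z)) := by
  refine ⟨⟨1, fun _ => c, fun _ => a, by simp⟩, fun z => c⁻¹ * Complex.exp (-a * z),
    ⟨1, fun _ => c⁻¹, fun _ => -a, by simp⟩, ?_⟩
  funext z
  simp only [Pi.mul_apply, Pi.one_apply]
  have : Complex.exp (a * z) * Complex.exp (-a * z) = 1 := by
    rw [← Complex.exp_add]; simp
  calc _ = (c * c⁻¹) * (Complex.exp (a * z) * Complex.exp (-a * z)) := by ring
    _ = 1 := by rw [this, mul_inv_cancel₀ hc, one_mul]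

theorem exponents_aux {N : ℕ} (mu : Fin N → ℂ)
    (h : Module.finrank ℚ (Submodule.span ℚ (Set.range mu)) = 1) :
    ∃ (w : ℂ) (m : ℤ) (e : Fin N → ℕ), w ≠ 0 ∧ ∀ i, mu i = ((m : ℂ) + (e i : ℂ)) * w := by
  obtain ⟨v, hv, hspan⟩ := finrank_eq_one_iff'.mp h
  have hv0 : (v : ℂ) ≠ 0 := by simpa using hv
  have h1 : ∀ i, ∃ q : ℚ, (q : ℂ) * v = mu i := by
    intro i
    obtain ⟨q, hq⟩ := hspan ⟨mu i, Submodule.subset_span ⟨i, rfl⟩⟩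
    refine ⟨q, ?_⟩
    have := congrArg Subtype.val hq
    simpa [Rat.smul_def] using this
  choose q hq using h1
  obtain ⟨b, hb⟩ := IsLocalization.exist_integer_multiples_of_finite (nonZeroDivisors ℤ) q
  choose k hk using hb
  have hb0 : ((b : ℤ) : ℂ) ≠ 0 := by exact_mod_cast nonZeroDivisors.coe_ne_zero b
  have hk' : ∀ i, (k i : ℂ) = (b : ℤ) * (q i : ℂ) := by
    intro i
    have h3 : ((k i : ℤ) : ℚ) = ((b : ℤ) : ℚ) * q i := by simpa using hk i
    exact_mod_cast congrArg (fun t : ℚ => (t : ℂ)) h3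
  refine ⟨v / (b : ℤ), -∑ i, |k i|, fun i => (k i + ∑ i, |k i|).toNat, div_ne_zero hv0 hb0, ?_⟩
  intro i
  have hnn : 0 ≤ k i + ∑ i, |k i| := by
    have := Finset.single_le_sum (f := fun i => |k i|) (fun j _ => abs_nonneg _)
      (Finset.mem_univ i)
    have h2 := neg_abs_le (k i)
    linarith
  have h4 : (((k i + ∑ i, |k i|).toNat : ℕ) : ℂ) = ((k i + ∑ i, |k i| : ℤ) : ℂ) := by
    exact_mod_cast congrArg (fun t : ℤ => (t : ℂ)) (Int.toNat_of_nonneg hnn)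
  rw [h4, ← Int.cast_add, show -∑ i, |k i| + (k i + ∑ i, |k i|) = k i by ring, hk', ← hq]
  field_simp

theorem simple_factorization (f : ℂ → ℂ) (hf : IsSimple f) :
    ∃ (u : ℂ → ℂ) (μ : ℂ) (n : ℕ) (α : Fin n → ℂ),
      EUnit u ∧ μ ≠ 0 ∧ (∀ i, α i ≠ 0) ∧
      ∀ z : ℂ, f z = u z * ∏ i, (1 - α i * Complex.exp (μ * z)) := by
  obtain ⟨N, lam, mu, ⟨hlam, hinj, hrep⟩, hfr⟩ := hf
  obtain ⟨w, m, e, hw, he⟩ := exponents_aux mu hfr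
  have heinj : Function.Injective e := by
    intro i j hij
    apply hinj
    rw [he, he, hij]
  have hN : Nonempty (Fin N) := by
    by_contra hne
    rw [not_nonempty_iff] at hne
    rw [Set.range_eq_empty, Submodule.span_empty, finrank_bot] at hfr
    exact zero_ne_one hfr
  obtain ⟨i0⟩ := hN
  have hP : (∑ i, Polynomial.monomial (e i) (lam i) : Polynomial ℂ) ≠ 0 := by
    intro h0
    have := congrArg (fun p => Polynomial.coeff p (e i0)) h0
    simp [Polynomial.coeff_monomial, heinj.eq_iff] at this
    exact hlam i0 this
  obtain ⟨c, k, n, α, hc, hα, h⟩ := poly_fact_aux _ hP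
  refine ⟨fun z => c * Complex.exp (((m : ℂ) + k) * w * z), w, n, α, unit_aux _ _ hc, hw, hα, ?_⟩
  intro z
  have h5 := h (Complex.exp (w * z))
  rw [Polynomial.eval_finsetSum] at h5
  simp only [Polynomial.eval_monomial, ← Complex.exp_nat_mul] at h5
  have h6 : f z = Complex.exp (m * w * z) *
      ∑ i, lam i * Complex.exp ((e i : ℂ) * (w * z)) := by
    rw [hrep, Finset.mul_sum]
    refine Finset.sum_congr rfl fun i _ => ?_
    rw [he, show ((m : ℂ) + (e i : ℂ)) * w * z = m * w * z + (e i : ℂ) * (w * z) by ring,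
      Complex.exp_add]
    ring
  beta_reduce
  rw [h6, h5, show ((m : ℂ) + k) * w * z = m * w * z + (k : ℂ) * (w * z) by ring, Complex.exp_add]
  ring
end
end

section
/- Assume Schanuel's Conjecture. In the setup described, the transcendence degree over ℚ of the set {b_i·s : 1 ≤ i ≤ D, s ∈ S} is at most δ₁ + 2δ₂. -/
open Complex Set

noncomputable section

open AlgebraicIndependent in
/-- the algebraic closure operator over ℚ -/
def clQ (s : Set ℂ) : Set ℂ := (matroid ℚ ℂ).closure s

open AlgebraicIndependent in
lemma card_le_of_clQ {t : Finset ℂ} {X : Finset ℂ}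
    (ht : AlgebraicIndependent ℚ (Subtype.val : {x : ℂ // x ∈ t} → ℂ))
    (h : (t : Set ℂ) ⊆ clQ X) : t.card ≤ X.card := by
  have h1 : (matroid ℚ ℂ).Indep (t : Set ℂ) := ht
  have h2 := h1.encard_le_eRk_of_subset h
  rw [clQ, Matroid.eRk_closure_eq] at h2
  have h3 := h2.trans (Matroid.eRk_le_encard _ _)
  simpa using h3

open AlgebraicIndependent in
lemma clQ_mono {X Y : Set ℂ} (h : X ⊆ Y) : clQ X ⊆ clQ Y := Matroid.closure_subset_closure _ h

open AlgebraicIndependent in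
lemma subset_clQ (X : Set ℂ) : X ⊆ clQ X := Matroid.subset_closure _ X (by simp)

open AlgebraicIndependent in
lemma clQ_trans {X Y : Set ℂ} (h : X ⊆ clQ Y) : clQ X ⊆ clQ Y :=
  Matroid.closure_subset_closure_of_subset_closure h

open AlgebraicIndependent in
lemma mem_clQ {X : Set ℂ} {x : ℂ} : x ∈ clQ X ↔ IsAlgebraic (Algebra.adjoin ℚ X) x := by
  rw [clQ, matroid_closure_eq, SetLike.mem_coe, Subalgebra.mem_algebraicClosure]

open AlgebraicIndependent in
lemma clQ_eq (X : Set ℂ) : ∃ A : Subalgebra ℚ ℂ, (A : Set ℂ) = clQ X := by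
  refine ⟨(Subalgebra.algebraicClosure (Algebra.adjoin ℚ X) ℂ).restrictScalars ℚ, ?_⟩
  rw [clQ, matroid_closure_eq]; rfl

lemma clQ_mul {X : Set ℂ} {x y : ℂ} (hx : x ∈ clQ X) (hy : y ∈ clQ X) : x * y ∈ clQ X := by
  obtain ⟨A, hA⟩ := clQ_eq X
  rw [← hA] at hx hy ⊢
  exact A.mul_mem hx hy

lemma clQ_addSubgroup {X Y : Set ℂ} (hX : X ⊆ clQ Y) :
    (AddSubgroup.closure X : Set ℂ) ⊆ clQ Y := by
  obtain ⟨A, hA⟩ := clQ_eq Y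
  rw [← hA] at hX ⊢
  have : AddSubgroup.closure X ≤ A.toSubring.toAddSubgroup := (AddSubgroup.closure_le _).2 hX
  exact this

lemma mem_clQ_of_adjoin {L T : Set ℂ} {x : ℂ}
    (h : IsAlgebraic (Algebra.adjoin (IntermediateField.adjoin ℚ L) T) x) :
    x ∈ clQ (L ∪ T) := by
  rw [mem_clQ, ← IntermediateField.isAlgebraic_adjoin_iff]
  have hle : ∀ y ∈ Algebra.adjoin (IntermediateField.adjoin ℚ L) T,
      y ∈ IntermediateField.adjoin ℚ (L ∪ T) := by
    intro y hy
    induction hy using Algebra.adjoin_induction with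
    | mem x hx => exact IntermediateField.subset_adjoin _ _ (Or.inr hx)
    | algebraMap r =>
      exact IntermediateField.adjoin.mono ℚ L (L ∪ T) subset_union_left r.2
    | add x y _ _ hx hy => exact add_mem hx hy
    | mul x y _ _ hx hy => exact mul_mem hx hy
  let f : Algebra.adjoin (IntermediateField.adjoin ℚ L) T →+*
      IntermediateField.adjoin ℚ (L ∪ T) :=
    { toFun := fun y => ⟨y.1, hle _ y.2⟩
      map_one' := rfl
      map_zero' := rfl
      map_add' := fun _ _ => rfl
      map_mul' := fun _ _ => rfl }
  have := h.ringHom_of_comp_eq f (RingHom.id ℂ) (by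
    intro a b hab
    exact Subtype.ext (congrArg (fun z => z.1) hab)) (by ext; rfl)
  simpa using this

lemma card_le_trdegQ {X : Set ℂ} {t : Finset ℂ} (h : (t : Set ℂ) ⊆ X)
    (ht : AlgebraicIndependent ℚ (Subtype.val : {x : ℂ // x ∈ t} → ℂ)) :
    (t.card : Cardinal) ≤ trdegQ X :=
  le_ciSup (f := fun t : {t : Finset ℂ // (t : Set ℂ) ⊆ X ∧
    AlgebraicIndependent ℚ (Subtype.val : {x : ℂ // x ∈ t} → ℂ)} => (t.1.card : Cardinal.{0}))
    Cardinal.bddAbove_of_small ⟨t, h, ht⟩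

lemma finite_of_bound {α : Type*} {I : Set α} (n : ℕ)
    (h : ∀ t : Finset α, (t : Set α) ⊆ I → t.card ≤ n) :
    ∃ t : Finset α, (t : Set α) = I ∧ t.card ≤ n := by
  have hf : I.Finite := by
    by_contra hc
    obtain ⟨t, ht, hc⟩ := Set.Infinite.exists_subset_card_eq hc (n+1)
    have := h t ht
    omega
  exact ⟨hf.toFinset, by simp, h _ (by simp)⟩

open AlgebraicIndependent in
lemma exists_basis_of_trdegQ {X : Set ℂ} {n : ℕ} (h : trdegQ X = (n : Cardinal)) :
    ∃ I : Finset ℂ, I.card ≤ n ∧ X ⊆ clQ I := by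
  obtain ⟨I, hI⟩ := (matroid ℚ ℂ).exists_isBasis X (by simp)
  obtain ⟨t, rfl, ht⟩ := finite_of_bound (I := I) n (by
    intro t ht
    have := card_le_trdegQ (ht.trans hI.subset) (hI.indep.subset ht)
    rw [h] at this
    exact_mod_cast this)
  exact ⟨t, ht, hI.subset_closure⟩

lemma exists_of_le_trdegQ {X : Set ℂ} {n : ℕ} (h : (n : Cardinal) ≤ trdegQ X) :
    ∃ t : Finset ℂ, (t : Set ℂ) ⊆ X ∧
      AlgebraicIndependent ℚ (Subtype.val : {x : ℂ // x ∈ t} → ℂ) ∧ n ≤ t.card := by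
  rcases Nat.eq_zero_or_pos n with rfl | hn
  · refine ⟨∅, by simp, ?_, by simp⟩
    have : IsEmpty {x : ℂ // x ∈ (∅ : Finset ℂ)} := ⟨fun x => absurd x.2 (Finset.notMem_empty _)⟩
    rw [algebraicIndependent_empty_type_iff]
    exact (algebraMap ℚ ℂ).injective
  by_contra hc
  push Not at hc
  have : trdegQ X ≤ ((n - 1 : ℕ) : Cardinal) := by
    refine ciSup_le' fun t => ?_
    have := hc t.1 t.2.1 t.2.2
    exact_mod_cast (by omega : t.1.card ≤ n - 1)
  have := h.trans this
  have : n ≤ n - 1 := by exact_mod_cast this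
  omega

open Polynomial in
lemma elim1 {R : Type*} [CommRing R] [IsDomain R] [UniqueFactorizationMonoid R] [Algebra R ℂ]
    (inj : Function.Injective (algebraMap R ℂ)) (P Q : R[X]) (y : ℂ) (hP0 : P ≠ 0)
    (hP : aeval y P = 0) (hQ : aeval y Q = 0) (hrel : IsRelPrime P Q) : False := by
  let 𝔭 := RingHom.ker (aeval (R := R) y).toRingHom
  have hp : 𝔭.IsPrime := RingHom.ker_isPrime _
  have hne : 𝔭 ≠ ⊥ := by
    intro h
    have : P ∈ 𝔭 := hP
    rw [h] at this
    exact hP0 this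
  obtain ⟨p, hpm, hpp⟩ := hp.exists_mem_prime_of_ne_bot hne
  have hpy : aeval y p = 0 := hpm
  have hdeg : p.natDegree ≠ 0 := by
    intro h0
    rw [natDegree_eq_zero] at h0
    obtain ⟨c, rfl⟩ := h0
    rw [aeval_C] at hpy
    have : c = 0 := inj (by simpa using hpy)
    exact hpp.ne_zero (by simp [this])
  have hprim := hpp.irreducible.isPrimitive hdeg
  let _ : NormalizedGCDMonoid R := Classical.choice (inferInstance : Nonempty (NormalizedGCDMonoid R))
  have hirr := (hprim.irreducible_iff_irreducible_map_fraction_map (K := FractionRing R)).1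
    hpp.irreducible
  let φ : FractionRing R →+* ℂ := IsFractionRing.lift inj
  have hφ : φ.comp (algebraMap R (FractionRing R)) = algebraMap R ℂ := by
    ext r; simp [φ]
  have key : ∀ A : R[X], aeval y A = 0 → p ∣ A := by
    intro A hA
    rcases hirr.dvd_or_isRelPrime (n := A.map (algebraMap R (FractionRing R))) with h | h
    · exact hprim.dvd_of_fraction_map_dvd_fraction_map h
    · exfalso
      obtain ⟨u, v, huv⟩ := h.isCoprime
      have := congrArg (eval₂ φ y) huv
      rw [eval₂_add, eval₂_mul, eval₂_mul, eval₂_map, eval₂_map, hφ, ← aeval_def, ← aeval_def,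
        hA, hpy] at this
      simp at this
  exact hpp.not_isUnit (hrel (key P hP) (key Q hQ))

open MvPolynomial in
lemma elim2 {K : Type*} [Field K] [Algebra K ℂ] {D : ℕ} (F G : MvPolynomial (Fin D) K)
    (a : Fin D → ℂ) (hF0 : F ≠ 0) (hF : aeval a F = 0) (hG : aeval a G = 0)
    (hrel : IsRelPrime F G) (i₀ : Fin D)
    (hind : AlgebraicIndependent K (fun i : {i // i ≠ i₀} => a i)) : False := by
  let e : MvPolynomial (Fin D) K ≃ₐ[K] Polynomial (MvPolynomial {i // i ≠ i₀} K) :=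
    (renameEquiv K (Equiv.optionSubtypeNe i₀).symm).trans (optionEquivLeft K _)
  let _ : Algebra (MvPolynomial {i // i ≠ i₀} K) ℂ :=
    (aeval (R := K) (fun i : {i // i ≠ i₀} => a i)).toRingHom.toAlgebra
  have hmap : ∀ x : MvPolynomial {i // i ≠ i₀} K, algebraMap (MvPolynomial {i // i ≠ i₀} K) ℂ x
    = aeval (fun i : {i // i ≠ i₀} => a i) x := fun _ => rfl
  have : IsScalarTower K (MvPolynomial {i // i ≠ i₀} K) ℂ :=
    IsScalarTower.of_algebraMap_eq (fun x => by rw [hmap]; simp [MvPolynomial.algebraMap_eq])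
  have hinj : Function.Injective (algebraMap (MvPolynomial {i // i ≠ i₀} K) ℂ) := hind
  have hev : ∀ A, Polynomial.aeval (a i₀) (e A) = aeval a A := by
    intro A
    have : ((Polynomial.aeval (R := MvPolynomial {i // i ≠ i₀} K) (a i₀)).restrictScalars K).comp
        e.toAlgHom = aeval a := by
      apply MvPolynomial.algHom_ext
      intro i
      by_cases h : i = i₀
      · subst h
        simp [e]
      · simp [e, Equiv.optionSubtypeNe_symm_of_ne h, hmap]
    rw [← this]; rfl
  refine elim1 hinj (e F) (e G) (a i₀) (by simpa using hF0) (by rw [hev, hF]) (by rw [hev, hG]) ?_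
  intro d h1 h2
  have := hrel (d := e.symm d) (by simpa using map_dvd e.symm h1) (by simpa using map_dvd e.symm h2)
  simpa using this.map e

open MvPolynomial in
lemma elim3 {K : Type*} [Field K] [Algebra K ℂ] {D : ℕ} (hD : 0 < D) (F G : MvPolynomial (Fin D) K)
    (a : Fin D → ℂ) (hF0 : F ≠ 0) (hF : aeval a F = 0) (hG : aeval a G = 0)
    (hrel : IsRelPrime F G) :
    ∃ I : Finset (Fin D), I.card + 2 ≤ D ∧ ∀ i, IsAlgebraic (Algebra.adjoin K (a '' I)) (a i) := by
  classical
  have hfin : {I : Finset (Fin D) | AlgebraicIndepOn K a (I : Set (Fin D))}.Finite := Set.toFinite _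
  obtain ⟨I, hI⟩ := hfin.exists_maximal ⟨∅, by
    simp only [mem_ofPred_eq, Finset.coe_empty]
    exact (algebraicIndependent_empty_type_iff).2 (algebraMap K ℂ).injective⟩
  have hI1 : AlgebraicIndepOn K a (I : Set (Fin D)) := hI.1
  refine ⟨I, ?_, ?_⟩
  · by_contra hc
    have hcard : Iᶜ.card ≤ 1 := by
      rw [Finset.card_compl, Fintype.card_fin]; omega
    have : ∃ i₀ : Fin D, ∀ i, i ≠ i₀ → i ∈ I := by
      rcases Finset.eq_empty_or_nonempty Iᶜ with h | ⟨i₀, h⟩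
      · refine ⟨⟨0, hD⟩, fun i _ => ?_⟩
        by_contra hi
        have : i ∈ Iᶜ := by simpa using hi
        simp [h] at this
      · refine ⟨i₀, fun i hi => ?_⟩
        by_contra hi'
        exact hi (Finset.card_le_one.1 hcard i (by simpa using hi') i₀ h)
    obtain ⟨i₀, hi₀⟩ := this
    exact elim2 F G a hF0 hF hG hrel i₀ (AlgebraicIndepOn.mono (s := {i | i ≠ i₀}) (t := (I : Set (Fin D))) hI1 (fun i hi => hi₀ i hi))
  · intro i
    by_contra hi
    have h2 := AlgebraicIndepOn.insert hI1 hi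
    have h3 : insert i I ≤ I := hI.2 (by simpa using h2) (Finset.subset_insert _ _)
    have : a i ∈ Algebra.adjoin K (a '' I) :=
      Algebra.subset_adjoin ⟨i, h3 (Finset.mem_insert_self _ _), rfl⟩
    exact hi (isAlgebraic_algebraMap (⟨a i, this⟩ : Algebra.adjoin K (a '' I)))
lemma isExpPoly_of_fintype {ι : Type*} [Fintype ι] (lam mu : ι → ℂ) {f : ℂ → ℂ}
    (h : ∀ z, f z = ∑ i, lam i * Complex.exp (mu i * z)) : IsExpPoly f := by
  let e := Fintype.equivFin ι
  refine ⟨Fintype.card ι, lam ∘ e.symm, mu ∘ e.symm, fun z => ?_⟩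
  rw [h z]
  exact (Equiv.sum_comp e.symm (fun i => lam i * Complex.exp (mu i * z))).symm

lemma IsExpPoly.mul {f g : ℂ → ℂ} (hf : IsExpPoly f) (hg : IsExpPoly g) : IsExpPoly (f * g) := by
  obtain ⟨N, lam, mu, h⟩ := hf
  obtain ⟨M, l, m, h'⟩ := hg
  refine isExpPoly_of_fintype (ι := Fin N × Fin M) (fun p => lam p.1 * l p.2)
    (fun p => mu p.1 + m p.2) fun z => ?_
  rw [Pi.mul_apply, h, h', Finset.sum_mul_sum, Fintype.sum_prod_type]
  refine Finset.sum_congr rfl fun i _ => Finset.sum_congr rfl fun j _ => ?_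
  rw [add_mul, Complex.exp_add]; ring

lemma isExpPoly_exp (α : ℂ) : IsExpPoly (fun z => Complex.exp (α * z)) :=
  isExpPoly_of_fintype (ι := Unit) (fun _ => 1) (fun _ => α) (by simp)

lemma prod_exp_pow {D : ℕ} (b : Fin D → ℂ) (m : Fin D → ℕ) (z : ℂ) :
    ∏ j, (Complex.exp (b j * z)) ^ (m j) = Complex.exp ((∑ j, m j * b j) * z) := by
  rw [Finset.sum_mul, Complex.exp_sum]
  refine Finset.prod_congr rfl fun j _ => ?_
  rw [← Complex.exp_nat_mul]; ring_nf

open MvPolynomial in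
lemma isExpPoly_aeval {K : Type*} [Field K] [Algebra K ℂ] {D : ℕ} (b : Fin D → ℂ)
    (F : MvPolynomial (Fin D) K) :
    IsExpPoly (fun z => aeval (fun j => Complex.exp (b j * z)) F) := by
  refine isExpPoly_of_fintype (ι := F.support) (fun d => algebraMap K ℂ (F.coeff d))
    (fun d => ∑ j, (d.1 j : ℂ) * b j) fun z => ?_
  rw [aeval_def, eval₂_eq', ← Finset.sum_coe_sort]
  refine Finset.sum_congr rfl fun d _ => ?_
  rw [prod_exp_pow]

open MvPolynomial in
lemma exists_poly {L : Set ℂ} {D : ℕ} (b : Fin D → ℂ) {N : ℕ}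
    (lam mu : Fin N → ℂ) (hlam : ∀ i, lam i ∈ L)
    (hmu : ∀ i, mu i ∈ AddSubgroup.closure (Set.range b)) :
    ∃ (F : MvPolynomial (Fin D) (IntermediateField.adjoin ℚ L)) (α : ℂ), ∀ z,
      aeval (fun j => Complex.exp (b j * z)) F =
        Complex.exp (α * z) * ∑ i, lam i * Complex.exp (mu i * z) := by
  have hc : ∀ i, ∃ c : Fin D → ℤ, ∑ j, c j • b j = mu i := by
    intro i
    have := hmu i
    rw [← Submodule.span_int_eq_addSubgroupClosure] at this
    exact (Submodule.mem_span_range_iff_exists_fun ℤ).1 this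
  choose c hc using hc
  let T : ℕ := ∑ i, ∑ j, (c i j).natAbs
  have hT : ∀ i j, (c i j).natAbs ≤ T := fun i j =>
    (Finset.single_le_sum (f := fun j => (c i j).natAbs) (fun _ _ => Nat.zero_le _)
      (Finset.mem_univ j)).trans
    (Finset.single_le_sum (f := fun i => ∑ j, (c i j).natAbs) (fun _ _ => Nat.zero_le _)
      (Finset.mem_univ i))
  let e : Fin N → Fin D → ℕ := fun i j => (c i j + T).toNat
  have he : ∀ i j, (e i j : ℂ) = c i j + T := by
    intro i j
    have h1 : ((e i j : ℕ) : ℤ) = c i j + T := Int.toNat_of_nonneg (by have := hT i j; omega)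
    exact_mod_cast congrArg (Int.cast : ℤ → ℂ) h1
  refine ⟨∑ i, monomial (Finsupp.equivFunOnFinite.symm (e i))
    (⟨lam i, IntermediateField.subset_adjoin _ _ (hlam i)⟩ : IntermediateField.adjoin ℚ L),
    T * ∑ j, b j, fun z => ?_⟩
  rw [map_sum, Finset.mul_sum]
  refine Finset.sum_congr rfl fun i _ => ?_
  rw [aeval_monomial, Finsupp.prod_fintype _ _ (by simp)]
  simp only [Finsupp.equivFunOnFinite_symm_apply_apply]
  rw [prod_exp_pow]
  have : (∑ j, (e i j : ℂ) * b j) = mu i + T * ∑ j, b j := by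
    rw [← hc i, Finset.mul_sum, ← Finset.sum_add_distrib]
    refine Finset.sum_congr rfl fun j _ => ?_
    rw [he, zsmul_eq_mul]; ring
  rw [this, add_mul, Complex.exp_add]
  change lam i * _ = _
  ring

lemma EUnit.ne_zero {f : ℂ → ℂ} (h : EUnit f) (z : ℂ) : f z ≠ 0 := by
  obtain ⟨_, g, _, hg⟩ := h
  intro h0
  have := congrFun hg z
  simp [h0] at this

lemma eunit_of_common {f g h a a' : ℂ → ℂ} (hf : EIrreducible f) (hg : EIrreducible g)
    (hdist : ¬ ∃ u : ℂ → ℂ, EUnit u ∧ f = u * g) (hh : IsExpPoly h) (ha : IsExpPoly a)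
    (ha' : IsExpPoly a') (hfa : f = h * a) (hga : g = h * a') : EUnit h := by
  by_contra hu
  have h1 := (hf.2.2.2 h a hh ha hfa).resolve_left hu
  have h2 := (hg.2.2.2 h a' hh ha' hga).resolve_left hu
  obtain ⟨_, ai, hai, e1⟩ := h1
  obtain ⟨_, bi, hbi, e2⟩ := h2
  refine hdist ⟨a * bi, ⟨ha.mul hbi, ai * a', hai.mul ha', ?_⟩, ?_⟩
  · calc a * bi * (ai * a') = (a * ai) * (a' * bi) := by ring
      _ = 1 := by rw [e1, e2, one_mul]
  · calc f = h * a := hfa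
      _ = (a' * bi) * (h * a) := by rw [e2, one_mul]
      _ = a * bi * (h * a') := by ring
      _ = a * bi * g := by rw [← hga]

open MvPolynomial in
/-- the exponentials at a common zero have small transcendence degree -/
lemma exists_small {f g : ℂ → ℂ} {N M : ℕ} {lam mu : Fin N → ℂ} {l em : Fin M → ℂ}
    (hfrep : IsCanonicalRep f lam mu) (hgrep : IsCanonicalRep g l em)
    (hfirr : EIrreducible f) (hgirr : EIrreducible g)
    (hdist : ¬ ∃ u : ℂ → ℂ, EUnit u ∧ f = u * g)
    {D : ℕ} (hD : 0 < D) (b : Fin D → ℂ)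
    (hbgen : AddSubgroup.closure (Set.range mu ∪ Set.range em) =
      AddSubgroup.closure (Set.range b)) (s : ℂ) (hfs : f s = 0) (hgs : g s = 0) :
    ∃ I : Finset (Fin D), I.card + 2 ≤ D ∧ ∀ i, Complex.exp (b i * s) ∈
      clQ ((Set.range lam ∪ Set.range l) ∪ ((fun i => Complex.exp (b i * s)) '' I)) := by
  obtain ⟨F, α, hF⟩ := exists_poly (L := Set.range lam ∪ Set.range l) b lam mu
    (fun i => Or.inl ⟨i, rfl⟩)
    (fun i => hbgen ▸ AddSubgroup.subset_closure (Or.inl ⟨i, rfl⟩))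
  obtain ⟨G, β, hG⟩ := exists_poly (L := Set.range lam ∪ Set.range l) b l em
    (fun i => Or.inr ⟨i, rfl⟩)
    (fun i => hbgen ▸ AddSubgroup.subset_closure (Or.inr ⟨i, rfl⟩))
  simp_rw [← hfrep.2.2] at hF
  simp_rw [← hgrep.2.2] at hG
  have hF0 : F ≠ 0 := by
    rintro rfl
    apply hfirr.2.1
    funext z
    have := hF z
    simpa [Complex.exp_ne_zero] using this
  obtain ⟨A, B, H, hrel, hA, hB⟩ := UniqueFactorizationMonoid.exists_reduced_factors F hF0 G
  have hAs : ∀ (A : MvPolynomial (Fin D) (IntermediateField.adjoin ℚ (Set.range lam ∪ Set.range l)))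
      (F : MvPolynomial (Fin D) (IntermediateField.adjoin ℚ (Set.range lam ∪ Set.range l)))
      (f : ℂ → ℂ) (α : ℂ), H * A = F →
      (∀ z, aeval (fun j => Complex.exp (b j * z)) F = Complex.exp (α * z) * f z) →
      f = (fun z => aeval (fun j => Complex.exp (b j * z)) H) *
        ((fun z => aeval (fun j => Complex.exp (b j * z)) A) *
          (fun z => Complex.exp (-α * z))) := by
    intro A F f α h1 h2
    funext z
    have := h2 z
    rw [← h1, map_mul] at this
    simp only [Pi.mul_apply]
    rw [← mul_assoc, this, neg_mul, Complex.exp_neg]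
    field_simp [Complex.exp_ne_zero]
  have hu := eunit_of_common hfirr hgirr hdist (isExpPoly_aeval b H)
    ((isExpPoly_aeval b A).mul (isExpPoly_exp _)) ((isExpPoly_aeval b B).mul (isExpPoly_exp _))
    (hAs A F f α hA hF) (hAs B G g β hB hG)
  have hHs := hu.ne_zero s
  have hA0 : aeval (fun j => Complex.exp (b j * s)) A = 0 := by
    have := hF s
    rw [← hA, map_mul, hfs, mul_zero] at this
    exact (mul_eq_zero.1 this).resolve_left hHs
  have hB0 : aeval (fun j => Complex.exp (b j * s)) B = 0 := by
    have := hG s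
    rw [← hB, map_mul, hgs, mul_zero] at this
    exact (mul_eq_zero.1 this).resolve_left hHs
  obtain ⟨I, hI, h⟩ := elim3 hD A B (fun j => Complex.exp (b j * s))
    (by rintro rfl; exact hF0 (by rw [← hA, mul_zero])) hA0 hB0 hrel
  exact ⟨I, hI, fun i => mem_clQ_of_adjoin (h i)⟩

/-- the Schanuel counting step -/
lemma count_step (hSC : SchanuelConjecture) {D : ℕ} (b : Fin D → ℂ)
    (hb : LinearIndependent ℚ b) (L0 B0 : Finset ℂ)
    (hB0 : Set.range b ⊆ clQ B0) (s : Finset ℂ)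
    (hs : AlgebraicIndependent (IntermediateField.adjoin ℚ (Set.range b))
      (Subtype.val : {x : ℂ // x ∈ s} → ℂ))
    (I : ℂ → Finset (Fin D)) (hI : ∀ σ ∈ s, (I σ).card + 2 ≤ D)
    (hcl : ∀ σ ∈ s, ∀ i, Complex.exp (b i * σ) ∈
      clQ (L0 ∪ ((fun i => Complex.exp (b i * σ)) '' I σ))) :
    s.card ≤ L0.card + B0.card := by
  classical
  let K := IntermediateField.adjoin ℚ (Set.range b)
  let b' : Fin D → K := fun i => ⟨b i, IntermediateField.subset_adjoin _ _ ⟨i, rfl⟩⟩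
  have hb' : LinearIndependent ℚ b' :=
    LinearIndependent.of_comp (K.val.toLinearMap) hb
  have hlin := linearIndependent_smul hb' hs.linearIndependent
  let e := (Fintype.equivFin (Fin D × {x : ℂ // x ∈ s})).symm
  have hlin2 := hlin.comp e e.injective
  obtain ⟨t, htX, hti, htc⟩ := exists_of_le_trdegQ (hSC _ _ hlin2)
  rw [Fintype.card_prod, Fintype.card_fin, Fintype.card_coe] at htc
  let X : Finset ℂ := L0 ∪ B0 ∪ s ∪ s.biUnion fun σ => (I σ).image fun i => Complex.exp (b i * σ)
  have hbX : ∀ i, b i ∈ clQ X := fun i => clQ_mono (by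
    intro x hx; simp only [X, Finset.coe_union]; exact Or.inl (Or.inl (Or.inr hx))) (hB0 ⟨i, rfl⟩)
  have hsX : ∀ σ ∈ s, σ ∈ clQ X := fun σ h => subset_clQ _ (by
    simp only [X, Finset.coe_union]; exact Or.inl (Or.inr h))
  have hle := card_le_of_clQ (X := X) hti (by
    intro x hx
    rcases htX hx with ⟨j, rfl⟩ | ⟨j, rfl⟩
    · exact clQ_mul (hbX (e j).1) (hsX _ (e j).2.2)
    · refine clQ_mono ?_ (hcl (e j).2.1 (e j).2.2 (e j).1)
      rintro x (hx | ⟨i, hi, rfl⟩)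
      · simp only [X, Finset.coe_union]; exact Or.inl (Or.inl (Or.inl hx))
      · simp only [X, Finset.coe_union]
        refine Or.inr ?_
        simp only [Finset.coe_biUnion, Set.mem_iUnion]
        exact ⟨(e j).2.1, (e j).2.2, Finset.mem_coe.2 (Finset.mem_image.2 ⟨i, hi, rfl⟩)⟩)
  have h1 : X.card ≤ L0.card + B0.card + s.card + ∑ σ ∈ s, (I σ).card := by
    refine (Finset.card_union_le _ _).trans (add_le_add ?_ ?_)
    · exact (Finset.card_union_le _ _).trans (add_le_add_left (Finset.card_union_le _ _) _)
    · exact Finset.card_biUnion_le.trans (Finset.sum_le_sum fun σ _ => Finset.card_image_le)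
  have h2 : ∑ σ ∈ s, (I σ).card + 2 * s.card ≤ D * s.card := by
    calc _ = ∑ σ ∈ s, ((I σ).card + 2) := by
          rw [Finset.sum_add_distrib]; simp [mul_comm]
      _ ≤ ∑ σ ∈ s, D := Finset.sum_le_sum hI
      _ = D * s.card := by simp [mul_comm]
  omega

/-- Assuming Schanuel's Conjecture: the transcendence degree of `{bᵢ·s : i ≤ D, s ∈ S}`
over `ℚ` is at most `δ₁ + 2δ₂`. -/
theorem trdeg_BS_le (hSC : SchanuelConjecture)
    (f g : ℂ → ℂ) (N M : ℕ) (lam mu : Fin N → ℂ) (l em : Fin M → ℂ)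
    (hfrep : IsCanonicalRep f lam mu) (hgrep : IsCanonicalRep g l em)
    (hfirr : EIrreducible f) (hgirr : EIrreducible g)
    (hdist : ¬ ∃ u : ℂ → ℂ, EUnit u ∧ f = u * g)
    (S : Set ℂ) (hSinf : S.Infinite)
    (hS : ∀ s ∈ S, s ≠ 0 ∧ f s = 0 ∧ g s = 0)
    (D : ℕ) (b : Fin D → ℂ)
    (hD : Module.finrank ℚ (Submodule.span ℚ (Set.range mu ∪ Set.range em)) = D)
    (hbli : LinearIndependent ℤ b)
    (hbgen : AddSubgroup.closure (Set.range mu ∪ Set.range em) =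
      AddSubgroup.closure (Set.range b))
    (δ₁ δ₂ : ℕ)
    (hδ₁ : trdegQ (Set.range lam ∪ Set.range l) = (δ₁ : Cardinal))
    (hδ₂ : trdegQ (Set.range mu ∪ Set.range em) = (δ₂ : Cardinal))
 :
    trdegQ {x : ℂ | ∃ i : Fin D, ∃ s ∈ S, x = b i * s} ≤ ((δ₁ + 2 * δ₂ : ℕ) : Cardinal) := by
  refine ciSup_le' ?_
  rintro ⟨t, ht, hti⟩
  have key : t.card ≤ δ₁ + 2 * δ₂ := by
    rcases Nat.eq_zero_or_pos D with rfl | hDpos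
    · have : t = ∅ := by
        by_contra hne
        obtain ⟨x, hx⟩ := Finset.nonempty_iff_ne_empty.2 hne
        obtain ⟨i, _⟩ := ht hx
        exact i.elim0
      simp [this]
    have hb : LinearIndependent ℚ b := (LinearIndependent.iff_fractionRing ℤ ℚ).1 hbli
    obtain ⟨L0, hL0, hL⟩ := exists_basis_of_trdegQ hδ₁
    obtain ⟨B0, hB0, hB⟩ := exists_basis_of_trdegQ hδ₂
    have hbB : Set.range b ⊆ clQ B0 := by
      have h1 := clQ_addSubgroup hB
      rw [hbgen] at h1
      exact AddSubgroup.subset_closure.trans h1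
    have hsm : ∀ s ∈ S, _ := fun s hs => exists_small hfrep hgrep hfirr hgirr hdist hDpos b hbgen s
      (hS s hs).2.1 (hS s hs).2.2
    choose! I hI hcl using hsm
    obtain ⟨S0, hS0⟩ := (AlgebraicIndependent.matroid
      (IntermediateField.adjoin ℚ (Set.range b)) ℂ).exists_isBasis S (by simp)
    obtain ⟨s0, rfl, hs0⟩ := finite_of_bound (I := S0) (L0.card + B0.card) (by
      intro s hs
      refine count_step hSC b hb L0 B0 hbB s (hS0.indep.subset hs) I
        (fun σ hσ => hI σ (hS0.subset (hs hσ))) (fun σ hσ i => ?_)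
      refine clQ_trans ?_ (hcl σ (hS0.subset (hs hσ)) i)
      exact Set.union_subset (hL.trans (clQ_mono Set.subset_union_left))
        (Set.subset_union_right.trans (subset_clQ _)))
    classical
    have hb' : Set.range b ⊆ clQ (B0 ∪ s0 : Finset ℂ) := hbB.trans (clQ_mono (by simp))
    have hfin := card_le_of_clQ (X := B0 ∪ s0) hti (by
      intro x hx
      obtain ⟨i, σ, hσ, rfl⟩ := ht hx
      refine clQ_mul (hb' ⟨i, rfl⟩) ?_
      have h1 := (AlgebraicIndependent.matroid_isBasis_iff.1 hS0).2.2 σ hσ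
      refine clQ_trans ?_ (mem_clQ_of_adjoin h1)
      exact Set.union_subset hb' (Set.Subset.trans (by simp) (subset_clQ _)))
    have := Finset.card_union_le B0 s0
    omega
  exact_mod_cast key
end
end

section
/- Let f(z) = λ₁e^{μ₁z} + ⋯ + λ_N e^{μ_N z} be the canonical representation of an exponential polynomial in 𝓔 that is not simple (i.e. dim_ℚ supp(f) ≥ 2). If s₁ and s₂ are two distinct zeros of f in ℂ, then the N-tuples (e^{μ₁s₁},…,e^{μ_N s₁}) and (e^{μ₁s₂},…,e^{μ_N s₂}) are different. -/
open Complex Set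

noncomputable section

/-- If `f` is not simple and `s₁ ≠ s₂` are zeros of `f`, then the tuples
`(e^{μ₁s₁},…,e^{μ_N s₁})` and `(e^{μ₁s₂},…,e^{μ_N s₂})` are different. -/
theorem exp_tuples_ne_of_zeros (f : ℂ → ℂ) (N : ℕ) (lam mu : Fin N → ℂ)
    (hrep : IsCanonicalRep f lam mu)
    (hns : 2 ≤ Module.finrank ℚ (Submodule.span ℚ (Set.range mu)))
    (s₁ s₂ : ℂ) (hs₁ : f s₁ = 0) (hs₂ : f s₂ = 0) (hne : s₁ ≠ s₂) :
    (fun i : Fin N => Complex.exp (mu i * s₁)) ≠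
      (fun i : Fin N => Complex.exp (mu i * s₂)) := by
  intro h
  have hd : s₁ - s₂ ≠ 0 := sub_ne_zero.mpr hne
  have hsub : Submodule.span ℚ (Set.range mu) ≤
      Submodule.span ℚ {2 * (Real.pi : ℂ) * Complex.I / (s₁ - s₂)} := by
    rw [Submodule.span_le]
    rintro _ ⟨i, rfl⟩
    obtain ⟨n, hn⟩ := Complex.exp_eq_exp_iff_exists_int.mp (congrFun h i)
    refine Submodule.mem_span_singleton.mpr ⟨(n : ℚ), ?_⟩
    rw [Rat.smul_def]
    push_cast
    field_simp
    linear_combination -hn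
  have h1 := Submodule.finrank_mono hsub
  have h2 := finrank_span_singleton (K := ℚ) (v := 2 * (Real.pi : ℂ) * Complex.I / (s₁ - s₂))
    (div_ne_zero Complex.two_pi_I_ne_zero hd)
  omega
end
end

section
/- Let a, b, α, β be nonzero complex numbers and suppose the exponential polynomials f(z) = 1 − a·e^{αz} and g(z) = 1 − b·e^{βz} have infinitely many common zeros in ℂ. Then there exists a simple exponential polynomial h ∈ 𝓔, having infinitely many zeros in ℂ, which divides both f and g in the ring 𝓔. -/
open Complex Set

noncomputable section

theorem edvd_aux (a γ z0 : ℂ) (m : ℤ) (h0 : 1 - a * Complex.exp ((m * γ) * z0) = 0) :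
    EDvd (fun z : ℂ => 1 - Complex.exp (γ * (z - z0)))
      (fun z : ℂ => 1 - a * Complex.exp ((m * γ) * z)) := by
  have key : ∀ z : ℂ, a * Complex.exp ((m * γ) * z) = Complex.exp (m * (γ * (z - z0))) := by
    intro z
    have e : Complex.exp ((m * γ) * z)
        = Complex.exp (m * (γ * (z - z0))) * Complex.exp ((m * γ) * z0) := by
      rw [← Complex.exp_add]; congr 1; ring
    rw [e]
    linear_combination (-Complex.exp (m * (γ * (z - z0)))) * h0
  obtain ⟨k, rfl | rfl⟩ := m.eq_nat_or_neg
  · refine ⟨fun z => ∑ j : Fin k, Complex.exp (-(j * γ * z0)) * Complex.exp ((j * γ) * z),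
      ⟨k, fun j => Complex.exp (-(j * γ * z0)), fun j => j * γ, fun z => rfl⟩, ?_⟩
    funext z
    simp only [Pi.mul_apply]
    rw [key]
    have hs : ∑ j : Fin k, Complex.exp (-(j * γ * z0)) * Complex.exp ((j * γ) * z)
        = ∑ j ∈ Finset.range k, Complex.exp (γ * (z - z0)) ^ j := by
      rw [← Fin.sum_univ_eq_sum_range (fun j => Complex.exp (γ * (z - z0)) ^ j)]
      refine Finset.sum_congr rfl fun j _ => ?_
      rw [← Complex.exp_add, ← Complex.exp_nat_mul]; congr 1; ring
    rw [hs, mul_neg_geom_sum, ← Complex.exp_nat_mul]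
    simp
  · refine ⟨fun z => ∑ j : Fin k, (-Complex.exp (-((j - k) * γ * z0))) *
        Complex.exp (((j - k) * γ) * z),
      ⟨k, fun j => -Complex.exp (-((j - k) * γ * z0)), fun j => (j - k) * γ, fun z => rfl⟩, ?_⟩
    funext z
    simp only [Pi.mul_apply]
    rw [key]
    have hs : ∑ j : Fin k, (-Complex.exp (-((j - k) * γ * z0))) *
          Complex.exp (((j - k) * γ) * z)
        = -Complex.exp (-(k * (γ * (z - z0)))) *
          ∑ j ∈ Finset.range k, Complex.exp (γ * (z - z0)) ^ j := by
      rw [← Fin.sum_univ_eq_sum_range (fun j => Complex.exp (γ * (z - z0)) ^ j), Finset.mul_sum]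
      refine Finset.sum_congr rfl fun j _ => ?_
      rw [neg_mul, neg_mul, ← Complex.exp_add, ← Complex.exp_nat_mul, ← Complex.exp_add]
      congr 2; ring
    rw [hs, mul_left_comm (1 - _), mul_neg_geom_sum, ← Complex.exp_nat_mul, mul_sub (-_) 1, mul_one, neg_mul,
      ← Complex.exp_add]
    simp
    ring

/-- If `1 - a·e^{αz}` and `1 - b·e^{βz}` have infinitely many common zeros, then they have
a common simple divisor in `𝓔` with infinitely many zeros. -/
theorem shapiro_two_binomials (a b α β : ℂ)
    (ha : a ≠ 0) (hb : b ≠ 0) (hα : α ≠ 0) (hβ : β ≠ 0)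
    (hinf : {z : ℂ | 1 - a * Complex.exp (α * z) = 0 ∧
      1 - b * Complex.exp (β * z) = 0}.Infinite) :
    ∃ h : ℂ → ℂ, IsSimple h ∧ {z : ℂ | h z = 0}.Infinite ∧
      EDvd h (fun z : ℂ => 1 - a * Complex.exp (α * z)) ∧
      EDvd h (fun z : ℂ => 1 - b * Complex.exp (β * z)) := by
  obtain ⟨z0, ⟨h1, h2⟩, z1, ⟨h3, h4⟩, hne⟩ := hinf.nontrivial
  have hd : z1 - z0 ≠ 0 := sub_ne_zero.mpr hne.symm
  have aux : ∀ a α : ℂ, a ≠ 0 → 1 - a * Complex.exp (α * z0) = 0 →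
      1 - a * Complex.exp (α * z1) = 0 →
      ∃ m : ℤ, α = m * (2 * Real.pi * I / (z1 - z0)) := by
    intro a α ha h h'
    have e : Complex.exp (α * z1) = Complex.exp (α * z0) :=
      mul_left_cancel₀ ha (by linear_combination h - h')
    obtain ⟨m, hm⟩ := Complex.exp_eq_exp_iff_exists_int.mp e
    refine ⟨m, ?_⟩
    field_simp
    linear_combination hm
  obtain ⟨m, hm⟩ := aux a α ha h1 h3
  obtain ⟨n, hn⟩ := aux b β hb h2 h4
  have hγ : 2 * Real.pi * I / (z1 - z0) ≠ 0 := div_ne_zero Complex.two_pi_I_ne_zero hd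
  have hγd : 2 * Real.pi * I / (z1 - z0) * (z1 - z0) = 2 * Real.pi * I := div_mul_cancel₀ _ hd
  generalize 2 * Real.pi * I / (z1 - z0) = γ at *
  subst hm hn
  refine ⟨fun z => 1 - Complex.exp (γ * (z - z0)), ?_, ?_, edvd_aux a γ z0 m h1,
    edvd_aux b γ z0 n h2⟩
  · refine ⟨2, ![1, -Complex.exp (-(γ * z0))], ![0, γ], ⟨?_, ?_, ?_⟩, ?_⟩
    · intro i; fin_cases i <;> simp
    · intro i j; fin_cases i <;> fin_cases j <;> simp [hγ, hγ.symm]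
    · intro z
      simp [Fin.sum_univ_two, ← Complex.exp_add]
      rw [sub_eq_add_neg]; congr 3; ring
    · rw [Matrix.range_cons, Matrix.range_cons, Matrix.range_empty, Set.union_empty,
        Set.singleton_union, Submodule.span_insert_zero]
      exact finrank_span_singleton hγ
  · refine Set.infinite_of_injective_forall_mem (f := fun k : ℤ => z0 + k * (z1 - z0)) ?_ ?_
    · intro k l hkl
      simpa [hd] using hkl
    · intro k
      have : γ * (z0 + k * (z1 - z0) - z0) = k * (2 * Real.pi * I) := by
        rw [← hγd]; ring
      simp only [Set.mem_ofPred_eq, this, Complex.exp_int_mul_two_pi_mul_I, sub_self]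
end
end
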